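/- Let n ≥ 1 be an integer and δ ∈ (0, n]. For every f ∈ BLO(ℝⁿ, ℋ^δ_∞) there exist a constant α ∈ [0, ∞), a function b ∈ L^∞(ℝⁿ, ℋ^δ_∞), and a function g ∈ L¹_loc(ℝⁿ, ℋ^δ_∞) such that f(x) = α · ln(M_{ℋ^δ_∞} g(x)) + b(x) for ℋ^δ_∞-a.e. x ∈ ℝⁿ. -/

import Mathlib

open scoped ENNReal
open Set MeasureTheory

noncomputable section

/-- An axis-parallel cube in `ℝⁿ`, described by its lower corner and positive side length. -/
structure Cube (n : ℕ) where
  corner : Fin n → ℝ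
  side : ℝ
  side_pos : 0 < side

namespace Cube

/-- The half-open cube `∏ᵢ [cornerᵢ, cornerᵢ + side)` as a set of points. -/
def toSet {n : ℕ} (Q : Cube n) : Set (Fin n → ℝ) :=
  {x | ∀ i, Q.corner i ≤ x i ∧ x i < Q.corner i + Q.side}

/-- A cube is dyadic if it has the form `2^k·(z + [0,1)ⁿ)` with `k ∈ ℤ`, `z ∈ ℤⁿ`. -/
def IsDyadic {n : ℕ} (Q : Cube n) : Prop :=
  ∃ (k : ℤ) (z : Fin n → ℤ), Q.side = (2:ℝ) ^ k ∧ ∀ i, Q.corner i = (z i : ℝ) * (2:ℝ) ^ k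

/-- `Q'` is a dyadic subcube of `Q`, i.e. obtained from `Q` by repeated bisection. -/
def IsDyadicSubcube {n : ℕ} (Q' Q : Cube n) : Prop :=
  ∃ (k : ℕ) (z : Fin n → ℕ), (∀ i, z i < 2 ^ k) ∧
    Q'.side = Q.side / 2 ^ k ∧ ∀ i, Q'.corner i = Q.corner i + (z i : ℝ) * (Q.side / 2 ^ k)

/-- The concentric dilate `t·Q` of a cube. -/
def dilate {n : ℕ} (Q : Cube n) (t : ℝ) (ht : 0 < t) : Cube n :=
  ⟨fun i => Q.corner i + Q.side / 2 - t * Q.side / 2, t * Q.side, mul_pos ht Q.side_pos⟩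

end Cube

/-- The Hausdorff content `ℋ^δ_∞`. -/
def hContent (n : ℕ) (δ : ℝ) (E : Set (Fin n → ℝ)) : ℝ≥0∞ :=
  ⨅ (Qs : ℕ → Cube n) (_ : E ⊆ ⋃ i, (Qs i).toSet), ∑' i, ENNReal.ofReal ((Qs i).side ^ δ)

/-- The dyadic Hausdorff content `~ℋ^δ_∞`. -/
def dContent (n : ℕ) (δ : ℝ) (E : Set (Fin n → ℝ)) : ℝ≥0∞ :=
  ⨅ (Qs : ℕ → Cube n) (_ : (∀ i, (Qs i).IsDyadic) ∧ E ⊆ ⋃ i, (Qs i).toSet),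
    ∑' i, ENNReal.ofReal ((Qs i).side ^ δ)

/-- The Choquet integral `∫_E f dℋ^δ_∞`. -/
def integH (n : ℕ) (δ : ℝ) (f : (Fin n → ℝ) → ℝ) (E : Set (Fin n → ℝ)) : ℝ≥0∞ :=
  ∫⁻ t in Ioi (0:ℝ), hContent n δ {x | x ∈ E ∧ t < f x}

/-- The Choquet integral `∫_E f d~ℋ^δ_∞` w.r.t. the dyadic Hausdorff content. -/
def integD (n : ℕ) (δ : ℝ) (f : (Fin n → ℝ) → ℝ) (E : Set (Fin n → ℝ)) : ℝ≥0∞ :=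
  ∫⁻ t in Ioi (0:ℝ), dContent n δ {x | x ∈ E ∧ t < f x}

/-- A property holds `ℋ^δ_∞`-a.e. -/
def AEContent (n : ℕ) (δ : ℝ) (P : (Fin n → ℝ) → Prop) : Prop :=
  hContent n δ {x | ¬ P x} = 0

/-- `ℋ^δ_∞`-quasicontinuity. -/
def QuasiCont (n : ℕ) (δ : ℝ) (f : (Fin n → ℝ) → ℝ) : Prop :=
  ∀ ε : ℝ, 0 < ε → ∃ O : Set (Fin n → ℝ),
    IsOpen O ∧ hContent n δ O < ENNReal.ofReal ε ∧ ContinuousOn f Oᶜ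

/-- `L¹_loc(ℝⁿ, ℋ^δ_∞)`. -/
def MemL1loc (n : ℕ) (δ : ℝ) (f : (Fin n → ℝ) → ℝ) : Prop :=
  QuasiCont n δ f ∧ ∀ K : Set (Fin n → ℝ), IsCompact K → integH n δ (fun x => |f x|) K < ⊤

/-- `L^∞(ℝⁿ, ℋ^δ_∞)`. -/
def MemLinf (n : ℕ) (δ : ℝ) (f : (Fin n → ℝ) → ℝ) : Prop :=
  QuasiCont n δ f ∧ ∃ M : ℝ, AEContent n δ (fun x => |f x| ≤ M)

/-- The `BMO(ℝⁿ, ℋ^δ_∞)` seminorm. -/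
def bmoNorm (n : ℕ) (δ : ℝ) (f : (Fin n → ℝ) → ℝ) : ℝ≥0∞ :=
  ⨆ Q : Cube n, ⨅ c : ℝ,
    integH n δ (fun x => |f x - c|) Q.toSet / hContent n δ Q.toSet

/-- Membership in `BMO(ℝⁿ, ℋ^δ_∞)`. -/
def MemBMO (n : ℕ) (δ : ℝ) (f : (Fin n → ℝ) → ℝ) : Prop :=
  MemL1loc n δ f ∧ bmoNorm n δ f < ⊤

/-- `essinf_{x ∈ Q} f := inf {t ∈ (0,∞) : ℋ^δ_∞({x ∈ Q : f x < t}) > 0}`. -/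
def essInfQ (n : ℕ) (δ : ℝ) (f : (Fin n → ℝ) → ℝ) (Q : Cube n) : ℝ :=
  sInf {t : ℝ | 0 < t ∧ 0 < hContent n δ {x | x ∈ Q.toSet ∧ f x < t}}

/-- The `BLO(ℝⁿ, ℋ^δ_∞)` seminorm. -/
def bloNorm (n : ℕ) (δ : ℝ) (f : (Fin n → ℝ) → ℝ) : ℝ≥0∞ :=
  ⨆ Q : Cube n,
    integH n δ (fun x => |f x - essInfQ n δ f Q|) Q.toSet / hContent n δ Q.toSet

/-- Membership in `BLO(ℝⁿ, ℋ^δ_∞)`. -/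
def MemBLO (n : ℕ) (δ : ℝ) (f : (Fin n → ℝ) → ℝ) : Prop :=
  MemL1loc n δ f ∧ bloNorm n δ f < ⊤

/-- A weight: locally Choquet-integrable, quasicontinuous, positive `ℋ^δ_∞`-a.e. -/
def IsWeight (n : ℕ) (δ : ℝ) (w : (Fin n → ℝ) → ℝ) : Prop :=
  MemL1loc n δ w ∧ AEContent n δ (fun x => 0 < w x)

/-- The capacitary Muckenhoupt `A_{p,δ}` constant, for `p > 1`. -/
def apConst (n : ℕ) (δ p : ℝ) (w : (Fin n → ℝ) → ℝ) : ℝ≥0∞ :=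
  ⨆ Q : Cube n,
    (integH n δ w Q.toSet / hContent n δ Q.toSet) *
      (integH n δ (fun x => w x ^ (-(1 / (p - 1)))) Q.toSet / hContent n δ Q.toSet) ^ (p - 1)

/-- Membership in `A_{p,δ}`, `p > 1`. -/
def MemAp (n : ℕ) (δ p : ℝ) (w : (Fin n → ℝ) → ℝ) : Prop :=
  IsWeight n δ w ∧ apConst n δ p w < ⊤

/-- The Hardy–Littlewood maximal operator w.r.t. `ℋ^δ_∞`. -/
def maxOp (n : ℕ) (δ : ℝ) (g : (Fin n → ℝ) → ℝ) (x : Fin n → ℝ) : ℝ≥0∞ :=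
  ⨆ (Q : Cube n) (_ : x ∈ Q.toSet),
    integH n δ (fun y => |g y|) Q.toSet / hContent n δ Q.toSet

/-- The capacitary `A_{1,δ}` constant. -/
def a1Const (n : ℕ) (δ : ℝ) (w : (Fin n → ℝ) → ℝ) : ℝ≥0∞ :=
  sInf {c : ℝ≥0∞ | 0 < c ∧
    AEContent n δ (fun x => maxOp n δ w x ≤ c * ENNReal.ofReal (w x))}

/-- Membership in `A_{1,δ}`. -/
def MemA1 (n : ℕ) (δ : ℝ) (w : (Fin n → ℝ) → ℝ) : Prop :=
  IsWeight n δ w ∧ a1Const n δ w < ⊤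

/-- The `A_{p,δ}` constant for `p ∈ [1,∞)` (it is the `A_{1,δ}` constant when `p = 1`). -/
def apConstGen (n : ℕ) (δ p : ℝ) (w : (Fin n → ℝ) → ℝ) : ℝ≥0∞ :=
  if p = 1 then a1Const n δ w else apConst n δ p w

/-- Membership in `A_{p,δ}` for `p ∈ [1,∞)` (meaning `A_{1,δ}` when `p = 1`). -/
def MemApGen (n : ℕ) (δ p : ℝ) (w : (Fin n → ℝ) → ℝ) : Prop :=
  IsWeight n δ w ∧ apConstGen n δ p w < ⊤

/-- The weighted `BMO^q_w(ℝⁿ, ℋ^δ_∞)` seminorm. -/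
def bmoWNorm (n : ℕ) (δ q : ℝ) (w f : (Fin n → ℝ) → ℝ) : ℝ≥0∞ :=
  ⨆ Q : Cube n, ⨅ c : ℝ,
    (integH n δ (fun x => |f x - c| ^ q * w x) Q.toSet / integH n δ w Q.toSet) ^ (1 / q)

/-- Membership in `BMO^q_w(ℝⁿ, ℋ^δ_∞)`. -/
def MemBMOw (n : ℕ) (δ q : ℝ) (w f : (Fin n → ℝ) → ℝ) : Prop :=
  QuasiCont n δ f ∧
    (∀ K : Set (Fin n → ℝ), IsCompact K → integH n δ (fun x => |f x| ^ q * w x) K < ⊤) ∧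
    bmoWNorm n δ q w f < ⊤

/-- The integral average `f_{Q,δ}` with respect to the dyadic Hausdorff content. -/
def avgQ (n : ℕ) (δ : ℝ) (f : (Fin n → ℝ) → ℝ) (Q : Cube n) : ℝ :=
  ((integD n δ f (Q.toSet ∩ {x | 0 ≤ f x})).toReal -
      (integD n δ (fun x => -f x) (Q.toSet ∩ {x | f x < 0})).toReal) /
    ((dContent n δ (Q.toSet ∩ {x | 0 ≤ f x})).toReal +
      (dContent n δ (Q.toSet ∩ {x | f x < 0})).toReal)


section Part1
open scoped ENNReal
open Set MeasureTheory

variable {n : ℕ} {δ : ℝ}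

/-- The `δ`-size of a cube. -/
def Cube.sz (δ : ℝ) (Q : Cube n) : ℝ≥0∞ := ENNReal.ofReal (Q.side ^ δ)

lemma Cube.sz_pos (Q : Cube n) : 0 < Q.sz δ := by
  simp only [Cube.sz, ENNReal.ofReal_pos]
  exact Real.rpow_pos_of_pos Q.side_pos δ

lemma Cube.sz_ne_top (Q : Cube n) : Q.sz δ ≠ ⊤ := ENNReal.ofReal_ne_top

lemma hContent_mono {E F : Set (Fin n → ℝ)} (h : E ⊆ F) : hContent n δ E ≤ hContent n δ F := by
  unfold hContent
  refine le_iInf fun Qs => le_iInf fun hQ => ?_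
  exact iInf_le_of_le Qs (iInf_le _ (h.trans hQ))

/-- tiny cubes -/
lemma exists_tiny (hδ : 0 < δ) (n : ℕ) {ε : ℝ≥0∞} (hε : ε ≠ 0) :
    ∃ Qs : ℕ → Cube n, ∑' i, (Qs i).sz δ ≤ ε := by
  obtain ⟨e, he0, he⟩ := ENNReal.exists_pos_sum_of_countable hε ℕ
  refine ⟨fun i => ⟨0, (e i : ℝ) ^ (1/δ), Real.rpow_pos_of_pos (by exact_mod_cast he0 i) _⟩, ?_⟩
  refine le_trans (le_of_eq ?_) he.le
  congr 1; ext1 i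
  simp only [Cube.sz]
  rw [← Real.rpow_mul (by positivity), one_div_mul_cancel hδ.ne', Real.rpow_one]
  simp

lemma hContent_empty (hδ : 0 < δ) : hContent n δ ∅ = 0 := by
  refine le_antisymm (le_of_forall_pos_le_add fun ε hε => ?_) bot_le
  obtain ⟨Qs, h⟩ := exists_tiny hδ n hε.ne'
  rw [zero_add]
  exact iInf_le_of_le Qs (iInf_le_of_le (empty_subset _) h)

lemma hContent_cube_le (hδ : 0 < δ) (Q : Cube n) : hContent n δ Q.toSet ≤ Q.sz δ := by
  refine le_of_forall_pos_le_add fun ε hε => ?_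
  obtain ⟨Qs, h⟩ := exists_tiny hδ n hε.ne'
  refine iInf_le_of_le (fun i => Nat.casesOn i Q Qs) (iInf_le_of_le ?_ ?_)
  · exact fun x hx => mem_iUnion.2 ⟨0, hx⟩
  · rw [tsum_eq_zero_add' ENNReal.summable]
    exact add_le_add le_rfl h

lemma exists_cover {E : Set (Fin n → ℝ)} {t : ℝ≥0∞} (h : hContent n δ E < t) :
    ∃ Qs : ℕ → Cube n, E ⊆ ⋃ i, (Qs i).toSet ∧ ∑' i, (Qs i).sz δ < t := by
  unfold hContent at h
  simp only [iInf_lt_iff] at h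
  obtain ⟨Qs, h1, h2⟩ := h
  exact ⟨Qs, h1, h2⟩

lemma hContent_iUnion_nat (s : ℕ → Set (Fin n → ℝ)) :
    hContent n δ (⋃ i, s i) ≤ ∑' i, hContent n δ (s i) := by
  refine ENNReal.le_of_forall_pos_le_add fun ε hε hfin => ?_
  obtain ⟨e, he0, he⟩ := ENNReal.exists_pos_sum_of_countable (ε := (ε:ℝ≥0∞)) (by exact_mod_cast hε.ne') ℕ
  have : ∀ i, ∃ Qs : ℕ → Cube n, s i ⊆ ⋃ j, (Qs j).toSet ∧ ∑' j, (Qs j).sz δ < hContent n δ (s i) + e i := by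
    intro i
    apply exists_cover
    refine ENNReal.lt_add_right (ne_top_of_le_ne_top hfin.ne (ENNReal.le_tsum i)) ?_
    exact_mod_cast (he0 i).ne'
  choose Qs h1 h2 using this
  refine iInf_le_of_le (fun k => Qs k.unpair.1 k.unpair.2) (iInf_le_of_le ?_ ?_)
  · refine iUnion_subset fun i x hx => ?_
    obtain ⟨j, hj⟩ := mem_iUnion.1 (h1 i hx)
    exact mem_iUnion.2 ⟨Nat.pair i j, by simpa using hj⟩
  · calc ∑' k : ℕ, ENNReal.ofReal ((Qs k.unpair.1 k.unpair.2).side ^ δ)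
        = ∑' p : ℕ × ℕ, (Qs p.1 p.2).sz δ :=
          (Nat.pairEquiv.symm.tsum_eq (fun p : ℕ × ℕ => (Qs p.1 p.2).sz δ))
      _ = ∑' i, ∑' j, (Qs i j).sz δ := ENNReal.tsum_prod' (f := fun p : ℕ × ℕ => (Qs p.1 p.2).sz δ)
      _ ≤ ∑' i, (hContent n δ (s i) + e i) := ENNReal.tsum_le_tsum fun i => (h2 i).le
      _ = ∑' i, hContent n δ (s i) + ∑' i, (e i : ℝ≥0∞) := ENNReal.tsum_add
      _ ≤ _ := add_le_add le_rfl he.le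

/-- The content as an outer measure. -/
def hOuter (n : ℕ) (hδ : 0 < δ) : OuterMeasure (Fin n → ℝ) where
  measureOf := hContent n δ
  empty := hContent_empty hδ
  mono h := hContent_mono h
  iUnion_nat s _ := hContent_iUnion_nat s

lemma hOuter_apply (hδ : 0 < δ) (E : Set (Fin n → ℝ)) : hOuter n hδ E = hContent n δ E := rfl

lemma hContent_iUnion (hδ : 0 < δ) {ι : Type*} [Countable ι] (s : ι → Set (Fin n → ℝ)) :
    hContent n δ (⋃ i, s i) ≤ ∑' i, hContent n δ (s i) :=
  measure_iUnion_le (μ := hOuter n hδ) s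

lemma hContent_union (hδ : 0 < δ) (s t : Set (Fin n → ℝ)) :
    hContent n δ (s ∪ t) ≤ hContent n δ s + hContent n δ t :=
  measure_union_le (μ := hOuter n hδ) s t

lemma hContent_iUnion_null (hδ : 0 < δ) {ι : Type*} [Countable ι] {s : ι → Set (Fin n → ℝ)}
    (h : ∀ i, hContent n δ (s i) = 0) : hContent n δ (⋃ i, s i) = 0 :=
  measure_iUnion_null (μ := hOuter n hδ) h

lemma Cube.toSet_eq_pi (Q : Cube n) :
    Q.toSet = Set.pi univ fun i => Ico (Q.corner i) (Q.corner i + Q.side) := by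
  ext x; simp [Cube.toSet]

lemma Cube.volume_toSet (Q : Cube n) : volume Q.toSet = ENNReal.ofReal Q.side ^ n := by
  rw [Q.toSet_eq_pi, Real.volume_pi_Ico]
  simp

lemma le_hContent_cube (hδ : 0 < δ) (hδn : δ ≤ n) (Q : Cube n) : Q.sz δ ≤ hContent n δ Q.toSet := by
  refine le_iInf fun Qs => le_iInf fun hQ => ?_
  by_cases hb : ∃ i, Q.side ^ δ ≤ (Qs i).side ^ δ
  · obtain ⟨i, hi⟩ := hb
    exact (ENNReal.ofReal_le_ofReal hi).trans (ENNReal.le_tsum i)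
  push Not at hb
  have key : ∀ i, ENNReal.ofReal (Qs i).side ^ n * ENNReal.ofReal (Q.side ^ δ) ≤
      ENNReal.ofReal Q.side ^ n * ENNReal.ofReal ((Qs i).side ^ δ) := by
    intro i
    have h1 := (Qs i).side_pos
    have h2 := Q.side_pos
    rw [← ENNReal.ofReal_pow h1.le, ← ENNReal.ofReal_pow h2.le, ← ENNReal.ofReal_mul (by positivity),
      ← ENNReal.ofReal_mul (by positivity)]
    apply ENNReal.ofReal_le_ofReal
    have hle : (Qs i).side ≤ Q.side := by
      by_contra hc
      push Not at hc
      exact absurd (Real.rpow_le_rpow h2.le hc.le hδ.le) (not_le.2 (hb i))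
    rw [← Real.rpow_natCast, ← Real.rpow_natCast]
    have e1 : (Qs i).side ^ (n:ℝ) = (Qs i).side ^ (n - δ) * (Qs i).side ^ δ := by
      rw [← Real.rpow_add h1]; ring_nf
    have e2 : Q.side ^ (n:ℝ) = Q.side ^ (n - δ) * Q.side ^ δ := by
      rw [← Real.rpow_add h2]; ring_nf
    rw [e1, e2]
    have := Real.rpow_le_rpow h1.le hle (sub_nonneg.2 hδn)
    have p1 := Real.rpow_pos_of_pos h1 δ
    have p2 := Real.rpow_pos_of_pos h2 δ
    calc _ = (Qs i).side ^ (n - δ) * ((Qs i).side ^ δ * Q.side ^ δ) := by ring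
      _ ≤ Q.side ^ (n - δ) * ((Qs i).side ^ δ * Q.side ^ δ) := by gcongr
      _ = _ := by ring
  have hv : ENNReal.ofReal Q.side ^ n ≤ ∑' i, ENNReal.ofReal (Qs i).side ^ n := by
    rw [← Q.volume_toSet]
    refine (measure_mono hQ).trans ((measure_iUnion_le _).trans (le_of_eq ?_))
    simp_rw [Cube.volume_toSet]
  have hv0 : ENNReal.ofReal Q.side ^ n ≠ 0 := by
    have := Q.side_pos
    positivity
  have hvt : ENNReal.ofReal Q.side ^ n ≠ ⊤ := by simp
  rw [← ENNReal.mul_le_mul_iff_right hv0 hvt, ← ENNReal.tsum_mul_left]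
  calc _ ≤ (∑' i, ENNReal.ofReal (Qs i).side ^ n) * Q.sz δ := by gcongr
    _ = ∑' i, ENNReal.ofReal (Qs i).side ^ n * Q.sz δ := ENNReal.tsum_mul_right.symm
    _ ≤ _ := ENNReal.tsum_le_tsum key

lemma hContent_cube (hδ : 0 < δ) (hδn : δ ≤ n) (Q : Cube n) : hContent n δ Q.toSet = Q.sz δ :=
  le_antisymm (hContent_cube_le hδ Q) (le_hContent_cube hδ hδn Q)

end Part1


section Part2
open scoped ENNReal
open Set MeasureTheory

variable {n : ℕ} {δ : ℝ}

/-- Dyadic cubes of the grid adapted to the base cube `B`. -/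
def dy (B : Cube n) (p : ℤ × (Fin n → ℤ)) : Cube n :=
  ⟨fun i => B.corner i + B.side * 2 ^ p.1 * p.2 i, B.side * 2 ^ p.1,
    mul_pos B.side_pos (by positivity)⟩

/-- index of the dyadic cube at level `k` containing `x`. -/
def idx (B : Cube n) (k : ℤ) (x : Fin n → ℝ) : ℤ × (Fin n → ℤ) :=
  (k, fun i => ⌊(x i - B.corner i) / (B.side * 2 ^ k)⌋)

lemma mem_dy {B : Cube n} {p : ℤ × (Fin n → ℤ)} {x : Fin n → ℝ} :
    x ∈ (dy B p).toSet ↔ idx B p.1 x = p := by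
  have hs : 0 < B.side * 2 ^ p.1 := mul_pos B.side_pos (by positivity)
  simp only [Cube.toSet, dy, mem_ofPred_eq, idx, Prod.ext_iff, true_and, funext_iff]
  refine forall_congr' fun i => ?_
  rw [Int.floor_eq_iff, le_div_iff₀ hs, div_lt_iff₀ hs]
  constructor <;> rintro ⟨h1, h2⟩ <;> constructor <;> linarith

lemma mem_dy_idx (B : Cube n) (k : ℤ) (x : Fin n → ℝ) : x ∈ (dy B (idx B k x)).toSet :=
  mem_dy.2 rfl

lemma idx_succ {B : Cube n} {k : ℤ} {x y : Fin n → ℝ} (h : idx B k x = idx B k y) :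
    idx B (k+1) x = idx B (k+1) y := by
  simp only [idx, Prod.mk.injEq, true_and, funext_iff] at h ⊢
  intro i
  have key : ∀ x : Fin n → ℝ, ⌊(x i - B.corner i) / (B.side * 2 ^ (k+1))⌋ =
      ⌊(x i - B.corner i) / (B.side * 2 ^ k)⌋ / 2 := by
    intro x
    have := Int.floor_div_natCast ((x i - B.corner i) / (B.side * 2 ^ k)) 2
    rw [show ((2:ℕ):ℤ) = 2 from rfl] at this
    rw [← this, zpow_add_one₀ two_ne_zero, div_div, ← mul_assoc]
    norm_num
  rw [key, key, h i]

lemma idx_mono {B : Cube n} {k l : ℤ} (hkl : k ≤ l) {x y : Fin n → ℝ} (h : idx B k x = idx B k y) :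
    idx B l x = idx B l y := by
  induction l, hkl using Int.leInduction with
  | base => exact h
  | succ m hm ih => exact idx_succ ih

lemma dy_subset_idx {B : Cube n} {p : ℤ × (Fin n → ℤ)} {x : Fin n → ℝ} (hx : x ∈ (dy B p).toSet)
    {l : ℤ} (hl : p.1 ≤ l) : (dy B p).toSet ⊆ (dy B (idx B l x)).toSet := by
  intro y hy
  rw [mem_dy] at hx hy ⊢
  exact idx_mono hl (hy.trans hx.symm)

lemma dy_subset {B : Cube n} {p q : ℤ × (Fin n → ℤ)} {x : Fin n → ℝ} (hp : x ∈ (dy B p).toSet)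
    (hq : x ∈ (dy B q).toSet) (h : p.1 ≤ q.1) : (dy B p).toSet ⊆ (dy B q).toSet := by
  have := dy_subset_idx hp h
  rwa [mem_dy.1 hq] at this

lemma dy_eq {B : Cube n} {p q : ℤ × (Fin n → ℤ)} {x : Fin n → ℝ} (hp : x ∈ (dy B p).toSet)
    (hq : x ∈ (dy B q).toSet) (h : p.1 = q.1) : p = q := by
  rw [mem_dy] at hp hq
  rw [← hp, h, hq]

lemma Cube.corner_mem (Q : Cube n) : Q.corner ∈ Q.toSet := fun i => ⟨le_rfl, by linarith [Q.side_pos]⟩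

lemma dy_zero (B : Cube n) : dy B (0, 0) = B := by
  cases B; simp [dy]

lemma dy_side (B : Cube n) (p : ℤ × (Fin n → ℤ)) : (dy B p).side = B.side * 2 ^ p.1 := rfl

lemma Cube.sz_le_of_side_le (hδ : 0 < δ) {P Q : Cube n} {c : ℝ} (hc : 0 ≤ c) (h : P.side ≤ c * Q.side) :
    P.sz δ ≤ ENNReal.ofReal (c ^ δ) * Q.sz δ := by
  unfold Cube.sz
  rw [← ENNReal.ofReal_mul (by positivity), ← Real.mul_rpow hc Q.side_pos.le]
  exact ENNReal.ofReal_le_ofReal (Real.rpow_le_rpow P.side_pos.le h hδ.le)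

/-- The triple of a cube. -/
def Cube.tr (Q : Cube n) : Cube n :=
  ⟨fun i => Q.corner i - Q.side, 3 * Q.side, mul_pos (by norm_num) Q.side_pos⟩

lemma Cube.subset_tr (Q : Cube n) : Q.toSet ⊆ Q.tr.toSet := by
  intro x hx i
  have := hx i
  have := Q.side_pos
  simp only [Cube.tr]
  constructor <;> linarith

lemma Cube.tr_sz (hδ : 0 < δ) (Q : Cube n) : Q.tr.sz δ ≤ ENNReal.ofReal (3 ^ δ) * Q.sz δ :=
  Cube.sz_le_of_side_le hδ (by norm_num) le_rfl

lemma Cube.corner_le_of_subset {P Q : Cube n} (h : P.toSet ⊆ Q.toSet) (i : Fin n) :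
    Q.corner i ≤ P.corner i ∧ P.corner i + P.side ≤ Q.corner i + Q.side := by
  refine ⟨(h P.corner_mem i).1, ?_⟩
  refine le_of_forall_pos_lt_add fun ε hε => ?_
  have hp := P.side_pos
  have hm : (fun j => P.corner j + (P.side - min ε P.side / 2)) ∈ P.toSet := by
    intro j
    have := min_le_left ε P.side
    have := min_le_right ε P.side
    have : 0 < min ε P.side := lt_min hε hp
    constructor <;> linarith
  have := (h hm i).2
  have := min_le_left ε P.side
  linarith

lemma Cube.side_le_of_subset (hn : 1 ≤ n) {P Q : Cube n} (h : P.toSet ⊆ Q.toSet) : P.side ≤ Q.side := by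
  have := Cube.corner_le_of_subset h ⟨0, hn⟩
  linarith

lemma Cube.tr_mono (hn : 1 ≤ n) {P Q : Cube n} (h : P.toSet ⊆ Q.toSet) : P.tr.toSet ⊆ Q.tr.toSet := by
  intro x hx i
  have h1 := Cube.corner_le_of_subset h i
  have h2 := Cube.side_le_of_subset hn h
  have h3 := hx i
  simp only [Cube.tr] at h3 ⊢
  constructor <;> linarith

/-- covering a cube by `2^n` dyadic cubes of comparable size. -/
lemma exists_dy_cover (B Q : Cube n) : ∃ N : (Fin n → Fin 2) → ℤ × (Fin n → ℤ),
    Q.toSet ⊆ ⋃ e, (dy B (N e)).toSet ∧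
    ∀ e, Q.side ≤ (dy B (N e)).side ∧ (dy B (N e)).side ≤ 2 * Q.side ∧
      Q.toSet ⊆ (dy B (N e)).tr.toSet := by
  have hB := B.side_pos
  have hQ := Q.side_pos
  obtain ⟨k, hk1, hk2⟩ : ∃ k : ℤ, Q.side ≤ B.side * 2 ^ k ∧ B.side * 2 ^ k ≤ 2 * Q.side := by
    obtain ⟨k, h1, h2⟩ := exists_mem_Ioc_zpow (x := Q.side / B.side) (y := (2:ℝ)) (by positivity) (by norm_num)
    refine ⟨k+1, ?_, ?_⟩
    · rw [div_le_iff₀ hB] at h2; linarith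
    · rw [lt_div_iff₀ hB] at h1
      rw [zpow_add_one₀ two_ne_zero]; linarith
  set s := B.side * 2 ^ k with hs
  have hs0 : 0 < s := by positivity
  have fl : ∀ i, B.corner i + s * (⌊(Q.corner i - B.corner i) / s⌋ : ℝ) ≤ Q.corner i ∧
      Q.corner i < B.corner i + s * (⌊(Q.corner i - B.corner i) / s⌋ : ℝ) + s := by
    intro i
    have h1 := Int.floor_le ((Q.corner i - B.corner i) / s)
    have h2 := Int.lt_floor_add_one ((Q.corner i - B.corner i) / s)
    rw [le_div_iff₀ hs0] at h1
    rw [div_lt_iff₀ hs0] at h2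
    constructor <;> linarith
  refine ⟨fun e => (k, fun i => ⌊(Q.corner i - B.corner i) / s⌋ + (e i : ℕ)), ?_, fun e => ⟨hk1, hk2, ?_⟩⟩
  · intro x hx
    refine mem_iUnion.2 ⟨fun i => if x i < B.corner i + s * (⌊(Q.corner i - B.corner i) / s⌋ : ℝ) + s then 0 else 1, fun i => ?_⟩
    have h1 := fl i
    have h2 := hx i
    simp only [dy, ← hs]
    split_ifs with h
    · simp only [Fin.val_zero]; push_cast
      constructor <;> linarith
    · simp only [Fin.val_one]; push_cast
      constructor <;> linarith
  · intro x hx i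
    have h1 := fl i
    have h2 := hx i
    simp only [dy, Cube.tr, ← hs]
    have h3 : ((e i : ℕ) : ℝ) ≤ 1 := by
      have := (e i).2
      exact_mod_cast Nat.lt_succ_iff.1 this
    have h4 : (0:ℝ) ≤ ((e i : ℕ) : ℝ) := by positivity
    push_cast
    have := mul_le_mul_of_nonneg_left h3 hs0.le
    have := mul_nonneg hs0.le h4
    rw [mul_add]
    constructor <;> linarith

/-- dyadic covers almost compute the content -/
def Cn (n : ℕ) (δ : ℝ) : ℝ≥0∞ := 2 ^ n * ENNReal.ofReal (2 ^ δ)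

lemma exists_dyadic_cover (hδ : 0 < δ) (B : Cube n) {E : Set (Fin n → ℝ)} {t : ℝ≥0∞} (h : hContent n δ E < t) :
    ∃ S : ℕ × (Fin n → Fin 2) → ℤ × (Fin n → ℤ), E ⊆ ⋃ j, (dy B (S j)).toSet ∧
      ∑' j, (dy B (S j)).sz δ ≤ Cn n δ * t := by
  obtain ⟨Qs, h1, h2⟩ := exists_cover h
  choose N hN1 hN2 using fun i => exists_dy_cover B (Qs i)
  refine ⟨fun j => N j.1 j.2, ?_, ?_⟩
  · intro x hx
    obtain ⟨i, hi⟩ := mem_iUnion.1 (h1 hx)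
    obtain ⟨e, he⟩ := mem_iUnion.1 (hN1 i hi)
    exact mem_iUnion.2 ⟨(i, e), he⟩
  · rw [ENNReal.tsum_prod (f := fun i e => (dy B (N i e)).sz δ)]
    calc _ ≤ ∑' i, ∑' e : Fin n → Fin 2, ENNReal.ofReal (2 ^ δ) * (Qs i).sz δ :=
          ENNReal.tsum_le_tsum fun i => ENNReal.tsum_le_tsum fun e =>
            Cube.sz_le_of_side_le hδ (by norm_num) (hN2 i e).2.1
      _ = ∑' i, Cn n δ * (Qs i).sz δ := by
          congr 1; ext1 i
          rw [tsum_fintype]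
          simp [Cn, mul_assoc]
      _ = Cn n δ * ∑' i, (Qs i).sz δ := ENNReal.tsum_mul_left
      _ ≤ _ := by gcongr

/-- The packing lemma. -/
lemma packing (B : Cube n) {ι : Type*} (S : ι → ℤ × (Fin n → ℤ)) (T : Set (ℤ × (Fin n → ℤ)))
    (hT : ∀ p ∈ T, ∀ q ∈ T, ∀ x, x ∈ (dy B p).toSet → x ∈ (dy B q).toSet → p = q)
    (κ : ℝ≥0∞)
    (h : ∀ p ∈ T, κ * (dy B p).sz δ ≤
      ∑' j : {j // (dy B (S j)).toSet ⊆ (dy B p).toSet}, (dy B (S j)).sz δ) :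
    κ * ∑' p : T, (dy B p).sz δ ≤ ∑' j, (dy B (S j)).sz δ := by
  classical
  rw [← ENNReal.tsum_mul_left]
  calc _ ≤ ∑' p : T, ∑' j : {j | (dy B (S j)).toSet ⊆ (dy B p).toSet}, (dy B (S j)).sz δ :=
        ENNReal.tsum_le_tsum fun p => h p p.2
    _ = ∑' p : T, ∑' j, {j | (dy B (S j)).toSet ⊆ (dy B p).toSet}.indicator (fun j => (dy B (S j)).sz δ) j := by
        congr 1; ext1 p
        rw [tsum_subtype {j | (dy B (S j)).toSet ⊆ (dy B p).toSet} (fun j => (dy B (S j)).sz δ)]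
    _ = ∑' j, ∑' p : T, {j | (dy B (S j)).toSet ⊆ (dy B p).toSet}.indicator (fun j => (dy B (S j)).sz δ) j :=
        ENNReal.tsum_comm
    _ ≤ _ := by
        refine ENNReal.tsum_le_tsum fun j => ?_
        by_cases hj : ∃ p : T, (dy B (S j)).toSet ⊆ (dy B p).toSet
        · obtain ⟨p, hp⟩ := hj
          rw [tsum_eq_single p]
          · exact indicator_le_self' (fun _ _ => bot_le) j
          · intro q hq
            refine indicator_of_notMem (fun hq' => hq ?_) _
            exact Subtype.ext (hT q q.2 p p.2 _ (hq' (Cube.corner_mem _)) (hp (Cube.corner_mem _)))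
        · push Not at hj
          have : ∀ p : T, {j | (dy B (S j)).toSet ⊆ (dy B p).toSet}.indicator (fun j => (dy B (S j)).sz δ) j = 0 :=
            fun p => indicator_of_notMem (hj p) _
          simp [this]

/-- Being a maximal dyadic cube with a property. -/
def IsMaxDy (B : Cube n) (Pr : ℤ × (Fin n → ℤ) → Prop) (p : ℤ × (Fin n → ℤ)) : Prop :=
  Pr p ∧ ∀ q, (dy B p).toSet ⊆ (dy B q).toSet → p.1 < q.1 → ¬ Pr q

lemma IsMaxDy.eq {B : Cube n} {Pr : ℤ × (Fin n → ℤ) → Prop} {p q : ℤ × (Fin n → ℤ)} (hp : IsMaxDy B Pr p)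
    (hq : IsMaxDy B Pr q) {x} (hxp : x ∈ (dy B p).toSet) (hxq : x ∈ (dy B q).toSet) : p = q := by
  rcases lt_trichotomy p.1 q.1 with h | h | h
  · exact absurd hq.1 (hp.2 q (dy_subset hxp hxq h.le) h)
  · exact dy_eq hxp hxq h
  · exact absurd hp.1 (hq.2 p (dy_subset hxq hxp h.le) h)

lemma exists_max {B : Cube n} {Pr : ℤ × (Fin n → ℤ) → Prop} {p : ℤ × (Fin n → ℤ)} (hp : Pr p)
    (K : ℤ) (hK : ∀ q, (dy B p).toSet ⊆ (dy B q).toSet → K < q.1 → ¬ Pr q) :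
    ∃ q, IsMaxDy B Pr q ∧ (dy B p).toSet ⊆ (dy B q).toSet := by
  set x := (dy B p).corner with hx
  have hxp : x ∈ (dy B p).toSet := Cube.corner_mem _
  obtain ⟨k, ⟨hk1, hk2⟩, hk3⟩ := Int.exists_greatest_of_bdd (P := fun k => p.1 ≤ k ∧ Pr (idx B k x))
    ⟨K, fun k hk => by
      by_contra hc
      push Not at hc
      exact hK (idx B k x) (dy_subset_idx hxp hk.1) hc hk.2⟩ ⟨p.1, le_rfl, by rwa [mem_dy.1 hxp]⟩
  refine ⟨idx B k x, ⟨hk2, fun q hq hlt hPq => ?_⟩, dy_subset_idx hxp hk1⟩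
  have hxq : x ∈ (dy B q).toSet := hq (mem_dy_idx _ _ _)
  have := hk3 q.1 ⟨hk1.trans (le_of_lt hlt), by rwa [mem_dy.1 hxq]⟩
  exact absurd hlt (not_lt.2 this)

end Part2


section Part3
open scoped ENNReal
open Set MeasureTheory

variable {n : ℕ} {δ : ℝ}

lemma hContent_exists_open (hδ : 0 < δ) {E : Set (Fin n → ℝ)} {t : ℝ≥0∞} (h : hContent n δ E < t) :
    ∃ U, IsOpen U ∧ E ⊆ U ∧ hContent n δ U ≤ ENNReal.ofReal (3 ^ δ) * t := by
  obtain ⟨Qs, h1, h2⟩ := exists_cover h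
  refine ⟨⋃ i, interior (Qs i).tr.toSet, isOpen_iUnion fun i => isOpen_interior, ?_, ?_⟩
  · refine h1.trans (iUnion_mono fun i x hx => ?_)
    refine mem_interior.2 ⟨Set.pi univ fun j => Ioo ((Qs i).corner j - (Qs i).side) ((Qs i).corner j + 2 * (Qs i).side),
      ?_, isOpen_set_pi finite_univ fun _ _ => isOpen_Ioo, ?_⟩
    · intro y hy j
      have := hy j (mem_univ _)
      simp only [Cube.tr]
      exact ⟨this.1.le, by linarith [this.2]⟩
    · intro j _
      have := hx j
      have := (Qs i).side_pos
      constructor <;> linarith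
  · calc _ ≤ ∑' i, hContent n δ (interior (Qs i).tr.toSet) := hContent_iUnion hδ _
      _ ≤ ∑' i, ENNReal.ofReal (3 ^ δ) * (Qs i).sz δ := ENNReal.tsum_le_tsum fun i =>
          (hContent_mono interior_subset).trans ((hContent_cube_le hδ _).trans (Cube.tr_sz hδ _))
      _ = ENNReal.ofReal (3 ^ δ) * ∑' i, (Qs i).sz δ := ENNReal.tsum_mul_left
      _ ≤ _ := by gcongr

lemma Cn_ne_zero : Cn n δ ≠ 0 := by
  unfold Cn
  have : (0:ℝ) < 2 ^ δ := by positivity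
  positivity

lemma Cn_ne_top : Cn n δ ≠ ⊤ := by
  unfold Cn
  exact ENNReal.mul_ne_top (by simp) ENNReal.ofReal_ne_top

lemma exists_level_bound (hδ : 0 < δ) (B : Cube n) {t : ℝ≥0∞} (ht : t ≠ ⊤) :
    ∃ K : ℤ, ∀ q : ℤ × (Fin n → ℤ), K < q.1 → t ≤ (dy B q).sz δ := by
  have hB := B.side_pos
  obtain ⟨m, hm⟩ := pow_unbounded_of_one_lt (t.toReal ^ (1/δ) / B.side) (one_lt_two : (1:ℝ) < 2)
  refine ⟨m, fun q hq => ?_⟩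
  rw [← ENNReal.ofReal_toReal ht]
  refine ENNReal.ofReal_le_ofReal ?_
  rw [div_lt_iff₀ hB] at hm
  have h0 : (0:ℝ) ≤ t.toReal := ENNReal.toReal_nonneg
  have : t.toReal ^ (1/δ) ≤ (dy B q).side := by
    rw [dy_side]
    have : (2:ℝ) ^ (m:ℤ) ≤ 2 ^ q.1 := zpow_le_zpow_right₀ (by norm_num) hq.le
    rw [zpow_natCast] at this
    nlinarith
  have h2 := Real.rpow_le_rpow (by positivity) this hδ.le
  rwa [← Real.rpow_mul h0, one_div_mul_cancel hδ.ne', Real.rpow_one] at h2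

lemma weak_type (hn : 1 ≤ n) (hδ : 0 < δ) {θ : ℝ≥0∞} (hθ : θ ≠ 0) :
    ∃ D : ℝ≥0∞, D ≠ ⊤ ∧ ∀ (O : Set (Fin n → ℝ)) (t : ℝ≥0∞), t ≠ ⊤ → hContent n δ O < t →
      hContent n δ {x | ∃ Q : Cube n, x ∈ Q.toSet ∧ θ * Q.sz δ < hContent n δ (Q.toSet ∩ O)} ≤ D * t := by
  wlog hθt : θ ≠ ⊤ generalizing θ
  · obtain ⟨D, hD, h⟩ := this (θ := 1) one_ne_zero ENNReal.one_ne_top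
    refine ⟨D, hD, fun O t ht hO => le_trans (hContent_mono ?_) (h O t ht hO)⟩
    rintro x ⟨Q, hQ, hlt⟩
    refine ⟨Q, hQ, lt_of_le_of_lt ?_ hlt⟩
    gcongr
    rw [not_not.1 hθt]; exact le_top
  set θ' := θ / Cn n δ with hθ'
  have hθ'0 : θ' ≠ 0 := (ENNReal.div_pos hθ Cn_ne_top).ne'
  have hθ't : θ' ≠ ⊤ := ENNReal.div_ne_top hθt Cn_ne_zero
  refine ⟨ENNReal.ofReal (3 ^ δ) * (Cn n δ + θ'⁻¹ * Cn n δ), ?_, fun O t ht hO => ?_⟩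
  · exact ENNReal.mul_ne_top ENNReal.ofReal_ne_top (ENNReal.add_ne_top.2 ⟨Cn_ne_top,
      ENNReal.mul_ne_top (ENNReal.inv_ne_top.2 hθ'0) Cn_ne_top⟩)
  set B : Cube n := ⟨0, 1, one_pos⟩
  obtain ⟨S, hS1, hS2⟩ := exists_dyadic_cover hδ B hO
  set Pr : ℤ × (Fin n → ℤ) → Prop := fun p => θ' * (dy B p).sz δ < hContent n δ ((dy B p).toSet ∩ O) with hPr
  set T : Set (ℤ × (Fin n → ℤ)) := {p | IsMaxDy B Pr p ∧ ∀ j, ¬ (dy B p).toSet ⊆ (dy B (S j)).toSet} with hT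
  obtain ⟨K, hK⟩ := exists_level_bound hδ B (t := t / θ') (ENNReal.div_ne_top ht hθ'0)
  have hK' : ∀ q, K < q.1 → ¬ Pr q := by
    intro q hq
    simp only [hPr, not_lt]
    refine (hContent_mono inter_subset_right).trans (hO.le.trans ?_)
    have := hK q hq
    rwa [ENNReal.div_le_iff hθ'0 hθ't, mul_comm] at this
  have hsub : {x | ∃ Q : Cube n, x ∈ Q.toSet ∧ θ * Q.sz δ < hContent n δ (Q.toSet ∩ O)} ⊆
      (⋃ j, (dy B (S j)).tr.toSet) ∪ ⋃ p : T, (dy B p).tr.toSet := by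
    rintro x ⟨Q, hxQ, hlt⟩
    obtain ⟨N, hN1, hN2⟩ := exists_dy_cover B Q
    have : ∃ e, Pr (N e) := by
      by_contra hc
      push Not at hc
      simp only [hPr, not_lt] at hc
      refine absurd hlt (not_lt.2 ?_)
      calc hContent n δ (Q.toSet ∩ O) ≤ hContent n δ (⋃ e, (dy B (N e)).toSet ∩ O) := by
            apply hContent_mono
            rw [← iUnion_inter]
            exact inter_subset_inter_left _ hN1
        _ ≤ ∑' e, hContent n δ ((dy B (N e)).toSet ∩ O) := hContent_iUnion hδ _
        _ ≤ ∑' e : Fin n → Fin 2, θ' * (ENNReal.ofReal (2 ^ δ) * Q.sz δ) := ENNReal.tsum_le_tsum fun e =>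
            (hc e).trans (by gcongr; exact Cube.sz_le_of_side_le hδ (by norm_num) (hN2 e).2.1)
        _ = θ' * Cn n δ * Q.sz δ := by
            rw [tsum_fintype]; simp [Cn]; ring
        _ = θ * Q.sz δ := by rw [hθ', ENNReal.div_mul_cancel Cn_ne_zero Cn_ne_top]
    obtain ⟨e, he⟩ := this
    have hx : x ∈ (dy B (N e)).tr.toSet := (hN2 e).2.2 hxQ
    obtain ⟨q, hq1, hq2⟩ := exists_max he K (fun q _ hq => hK' q hq)
    by_cases hj : ∃ j, (dy B q).toSet ⊆ (dy B (S j)).toSet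
    · obtain ⟨j, hj⟩ := hj
      exact Or.inl (mem_iUnion.2 ⟨j, Cube.tr_mono hn (hq2.trans hj) hx⟩)
    · push Not at hj
      exact Or.inr (mem_iUnion.2 ⟨⟨q, hq1, hj⟩, Cube.tr_mono hn hq2 hx⟩)
  have hpack : θ' * ∑' p : T, (dy B p).sz δ ≤ ∑' j, (dy B (S j)).sz δ := by
    refine packing B S T (fun p hp q hq x hxp hxq => hp.1.eq hq.1 hxp hxq) θ' fun p hp => ?_
    refine hp.1.1.le.trans ?_
    calc _ ≤ hContent n δ (⋃ j : {j // (dy B (S j)).toSet ⊆ (dy B p).toSet}, (dy B (S j)).toSet) := by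
          refine hContent_mono fun y hy => ?_
          obtain ⟨j, hj⟩ := mem_iUnion.1 (hS1 hy.2)
          rcases le_total (S j).1 p.1 with h | h
          · exact mem_iUnion.2 ⟨⟨j, dy_subset hj hy.1 h⟩, hj⟩
          · exact absurd (dy_subset hy.1 hj h) (hp.2 j)
      _ ≤ _ := (hContent_iUnion hδ _).trans (ENNReal.tsum_le_tsum fun j => hContent_cube_le hδ _)
  have hpack2 : ∑' p : T, (dy B p).sz δ ≤ θ'⁻¹ * (Cn n δ * t) := by
    rw [mul_comm, ← div_eq_mul_inv, ENNReal.le_div_iff_mul_le (Or.inl hθ'0) (Or.inl hθ't), mul_comm]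
    exact hpack.trans hS2
  have htr : ∀ p, hContent n δ (dy B p).tr.toSet ≤ ENNReal.ofReal (3 ^ δ) * (dy B p).sz δ := fun p =>
    (hContent_cube_le hδ _).trans (Cube.tr_sz hδ _)
  calc _ ≤ _ := hContent_mono hsub
    _ ≤ _ := hContent_union hδ _ _
    _ ≤ (∑' j, ENNReal.ofReal (3 ^ δ) * (dy B (S j)).sz δ) + ∑' p : T, ENNReal.ofReal (3 ^ δ) * (dy B p).sz δ := by
        gcongr
        · exact (hContent_iUnion hδ _).trans (ENNReal.tsum_le_tsum fun j => htr _)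
        · exact (hContent_iUnion hδ _).trans (ENNReal.tsum_le_tsum fun j => htr _)
    _ = ENNReal.ofReal (3 ^ δ) * ((∑' j, (dy B (S j)).sz δ) + ∑' p : T, (dy B p).sz δ) := by
        rw [ENNReal.tsum_mul_left, ENNReal.tsum_mul_left, mul_add]
    _ ≤ ENNReal.ofReal (3 ^ δ) * (Cn n δ * t + θ'⁻¹ * (Cn n δ * t)) := by gcongr
    _ = _ := by ring

lemma ENNReal.exists_pos_mul_le {D η : ℝ≥0∞} (hD : D ≠ ⊤) (hη : η ≠ 0) :
    ∃ t : ℝ, 0 < t ∧ D * ENNReal.ofReal t ≤ η ∧ ENNReal.ofReal t ≤ η := by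
  wlog hηt : η ≠ ⊤ generalizing η
  · obtain ⟨t, h1, h2, h3⟩ := this (η := 1) one_ne_zero ENNReal.one_ne_top
    rw [not_not.1 hηt]
    exact ⟨t, h1, le_top, le_top⟩
  have h0 : η / (D + 1) ≠ 0 := (ENNReal.div_pos hη (by simp [hD])).ne'
  have ht : η / (D + 1) ≠ ⊤ := ENNReal.div_ne_top hηt (by simp)
  refine ⟨(η / (D+1)).toReal, ENNReal.toReal_pos h0 ht, ?_, ?_⟩ <;> rw [ENNReal.ofReal_toReal ht]
  · calc D * (η / (D+1)) ≤ (D+1) * (η / (D+1)) := by gcongr; exact le_self_add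
      _ = η := ENNReal.mul_div_cancel (by simp) (by simp [hD])
  · exact ENNReal.div_le_of_le_mul (le_mul_of_one_le_right' le_add_self)

/-- Uniform density off a small set. -/
lemma quasi_density (hn : 1 ≤ n) (hδ : 0 < δ) {u : (Fin n → ℝ) → ℝ} (hu : QuasiCont n δ u)
    {ε : ℝ≥0∞} (hε : ε ≠ 0) :
    ∃ (O : ℕ → Set (Fin n → ℝ)) (U : Set (Fin n → ℝ)), IsOpen U ∧ hContent n δ U ≤ ε ∧
      (∀ k, O k ⊆ U) ∧ (∀ k, ContinuousOn u (O k)ᶜ) ∧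
      ∀ k, ∀ x ∉ U, ∀ Q : Cube n, x ∈ Q.toSet →
        hContent n δ (Q.toSet ∩ O k) ≤ ENNReal.ofReal ((1/2) ^ k) * Q.sz δ := by
  have h3 : ENNReal.ofReal (3 ^ δ) ≠ ⊤ := ENNReal.ofReal_ne_top
  obtain ⟨ε₁, hε₁0, hε₁, -⟩ := ENNReal.exists_pos_mul_le h3 hε
  obtain ⟨e, he0, he⟩ := ENNReal.exists_pos_sum_of_countable (ENNReal.ofReal_pos.2 hε₁0).ne' ℕ
  have : ∀ k, ∃ O : Set (Fin n → ℝ), ContinuousOn u Oᶜ ∧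
      hContent n δ (O ∪ {x | ∃ Q : Cube n, x ∈ Q.toSet ∧ ENNReal.ofReal ((1/2) ^ k) * Q.sz δ < hContent n δ (Q.toSet ∩ O)}) ≤ e k := by
    intro k
    have hθ : ENNReal.ofReal ((1/2) ^ k) ≠ 0 := by
      have : (0:ℝ) < (1/2)^k := by positivity
      simpa using this
    obtain ⟨D, hD, hw⟩ := weak_type hn hδ hθ
    obtain ⟨t, ht0, ht1, -⟩ := ENNReal.exists_pos_mul_le (D := D + 1) (η := e k) (by simp [hD]) (by exact_mod_cast (he0 k).ne')
    obtain ⟨O, hO1, hO2, hO3⟩ := hu t ht0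
    refine ⟨O, hO3, (hContent_union hδ _ _).trans (le_trans ?_ ht1)⟩
    rw [add_mul, one_mul, add_comm]
    exact add_le_add (hw O _ ENNReal.ofReal_ne_top hO2) hO2.le
  choose O hO1 hO2 using this
  have hlt : hContent n δ (⋃ k, (O k ∪ {x | ∃ Q : Cube n, x ∈ Q.toSet ∧ ENNReal.ofReal ((1/2) ^ k) * Q.sz δ < hContent n δ (Q.toSet ∩ O k)})) <
      ENNReal.ofReal ε₁ :=
    ((hContent_iUnion hδ _).trans (ENNReal.tsum_le_tsum hO2)).trans_lt he
  obtain ⟨U, hU1, hU2, hU3⟩ := hContent_exists_open hδ hlt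
  refine ⟨O, U, hU1, hU3.trans hε₁, fun k x hx => hU2 (mem_iUnion.2 ⟨k, Or.inl hx⟩), hO1, fun k x hx Q hQ => ?_⟩
  by_contra hc
  exact hx (hU2 (mem_iUnion.2 ⟨k, Or.inr ⟨Q, hQ, not_le.1 hc⟩⟩))

/-- density points of `u` -/
def DensPt (n : ℕ) (δ : ℝ) (u : (Fin n → ℝ) → ℝ) (x : Fin n → ℝ) : Prop :=
  ∀ η : ℝ, 0 < η → ∀ θ : ℝ, 0 < θ → ∃ r : ℝ, 0 < r ∧ ∀ Q : Cube n, x ∈ Q.toSet → Q.side < r →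
    hContent n δ (Q.toSet ∩ {y | η ≤ |u y - u x|}) ≤ ENNReal.ofReal θ * Q.sz δ

lemma Cube.dist_lt {Q : Cube n} {x y : Fin n → ℝ} (hx : x ∈ Q.toSet) (hy : y ∈ Q.toSet) : dist x y < Q.side := by
  rw [dist_pi_lt_iff Q.side_pos]
  intro i
  have := hx i
  have := hy i
  rw [Real.dist_eq, abs_lt]
  constructor <;> linarith

lemma densPt_ae (hn : 1 ≤ n) (hδ : 0 < δ) {u : (Fin n → ℝ) → ℝ} (hu : QuasiCont n δ u) :
    AEContent n δ (DensPt n δ u) := by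
  refine le_antisymm (le_of_forall_pos_le_add fun ε hε => ?_) bot_le
  obtain ⟨O, U, -, hU, hOU, hc, hd⟩ := quasi_density hn hδ hu hε.ne'
  rw [zero_add]
  refine (hContent_mono fun x hx => ?_).trans hU
  by_contra hxU
  refine hx fun η hη θ hθ => ?_
  obtain ⟨k, hk⟩ := exists_pow_lt_of_lt_one hθ (by norm_num : (1/2:ℝ) < 1)
  have hxO : x ∈ (O k)ᶜ := fun h => hxU (hOU k h)
  obtain ⟨r, hr, hr2⟩ := Metric.continuousWithinAt_iff.1 (hc k x hxO) η hη
  refine ⟨r, hr, fun Q hxQ hQ => ?_⟩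
  calc _ ≤ hContent n δ (Q.toSet ∩ O k) := by
        refine hContent_mono fun y hy => ⟨hy.1, ?_⟩
        by_contra hyO
        have := hr2 hyO ((Cube.dist_lt hy.1 hxQ).trans hQ)
        rw [Real.dist_eq] at this
        exact absurd hy.2 (not_le.2 this)
    _ ≤ _ := hd k x hxU Q hxQ
    _ ≤ _ := by gcongr

end Part3


section Part4
open scoped ENNReal
open Set MeasureTheory

variable {n : ℕ} {δ : ℝ}

lemma integH_cheb (u : (Fin n → ℝ) → ℝ) (E : Set (Fin n → ℝ)) (t : ℝ) :
    ENNReal.ofReal t * hContent n δ {x | x ∈ E ∧ t < u x} ≤ integH n δ u E := by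
  unfold integH
  calc _ = ∫⁻ _ in Ioc (0:ℝ) t, hContent n δ {x | x ∈ E ∧ t < u x} := by
        rw [lintegral_const, Measure.restrict_apply_univ, Real.volume_Ioc, sub_zero, mul_comm]
    _ ≤ ∫⁻ s in Ioc (0:ℝ) t, hContent n δ {x | x ∈ E ∧ s < u x} := by
        refine setLIntegral_mono' measurableSet_Ioc fun s hs => hContent_mono fun x hx => ⟨hx.1, hs.2.trans_lt hx.2⟩
    _ ≤ _ := lintegral_mono_set Ioc_subset_Ioi_self

lemma integH_mono {u v : (Fin n → ℝ) → ℝ} {E F : Set (Fin n → ℝ)} (hEF : E ⊆ F) (h : ∀ x ∈ E, u x ≤ v x) :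
    integH n δ u E ≤ integH n δ v F :=
  lintegral_mono fun _ => hContent_mono fun x hx => ⟨hEF hx.1, hx.2.trans_le (h x hx.1)⟩

section essInf
variable {f : (Fin n → ℝ) → ℝ}

lemma essInfQ_nonneg (Q : Cube n) : 0 ≤ essInfQ n δ f Q :=
  Real.sInf_nonneg fun _ ht => ht.1.le

lemma essInfQ_null (hδ : 0 < δ) (hf : ∀ x, 0 ≤ f x) (Q : Cube n) :
    hContent n δ {x | x ∈ Q.toSet ∧ f x < essInfQ n δ f Q} = 0 := by
  have hsub : {x | x ∈ Q.toSet ∧ f x < essInfQ n δ f Q} ⊆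
      ⋃ m : ℕ, {x | x ∈ Q.toSet ∧ f x < essInfQ n δ f Q - 1 / (m + 1)} := by
    rintro x ⟨hx, hlt⟩
    obtain ⟨m, hm⟩ := exists_nat_one_div_lt (sub_pos.2 hlt)
    exact mem_iUnion.2 ⟨m, hx, by linarith⟩
  refine le_antisymm ((hContent_mono hsub).trans (le_of_eq (hContent_iUnion_null hδ fun m => ?_))) bot_le
  have hm : (0:ℝ) < 1 / (m + 1) := by positivity
  by_contra h0
  have hne : {x | x ∈ Q.toSet ∧ f x < essInfQ n δ f Q - 1 / (m + 1)}.Nonempty := by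
    rw [nonempty_iff_ne_empty]
    intro h
    rw [h] at h0
    exact h0 (hContent_empty hδ)
  obtain ⟨x, -, hx⟩ := hne
  have hmem : essInfQ n δ f Q - 1 / (m + 1) ∈ {t : ℝ | 0 < t ∧ 0 < hContent n δ {x | x ∈ Q.toSet ∧ f x < t}} :=
    ⟨(hf x).trans_lt hx, pos_iff_ne_zero.2 h0⟩
  have := csInf_le ⟨0, fun t ht => ht.1.le⟩ hmem
  have h2 : essInfQ n δ f Q ≤ essInfQ n δ f Q - 1 / (m + 1) := this
  linarith

lemma essInfQ_le (Q : Cube n) {t : ℝ} (ht : 0 < t) (h : 0 < hContent n δ {x | x ∈ Q.toSet ∧ f x < t}) :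
    essInfQ n δ f Q ≤ t :=
  csInf_le ⟨0, fun _ hs => hs.1.le⟩ ⟨ht, h⟩

lemma essInfQ_lt (hδ : 0 < δ) (hδn : δ ≤ n) (Q : Cube n) {t : ℝ} (h : essInfQ n δ f Q < t) :
    0 < hContent n δ {x | x ∈ Q.toSet ∧ f x < t} := by
  have hne : {t : ℝ | 0 < t ∧ 0 < hContent n δ {x | x ∈ Q.toSet ∧ f x < t}}.Nonempty := by
    by_contra hc
    rw [not_nonempty_iff_eq_empty] at hc
    have : ∀ m : ℕ, hContent n δ {x | x ∈ Q.toSet ∧ f x < (m:ℝ) + 1} = 0 := by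
      intro m
      by_contra h0
      have : ((m:ℝ) + 1) ∈ {t : ℝ | 0 < t ∧ 0 < hContent n δ {x | x ∈ Q.toSet ∧ f x < t}} :=
        ⟨by positivity, pos_iff_ne_zero.2 h0⟩
      rw [hc] at this
      exact this
    have h1 := hContent_iUnion_null hδ this
    have h2 : Q.toSet ⊆ ⋃ m : ℕ, {x | x ∈ Q.toSet ∧ f x < (m:ℝ) + 1} := by
      intro x hx
      obtain ⟨m, hm⟩ := exists_nat_gt (f x)
      exact mem_iUnion.2 ⟨m, hx, by linarith⟩
    have h3 := hContent_mono (δ := δ) h2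
    rw [h1, hContent_cube hδ hδn] at h3
    exact absurd h3 (not_le.2 Q.sz_pos)
  obtain ⟨s, hs, hst⟩ := exists_lt_of_csInf_lt hne h
  exact hs.2.trans_le (hContent_mono fun x hx => ⟨hx.1, hx.2.trans hst⟩)

lemma essInfQ_anti (hδ : 0 < δ) (hδn : δ ≤ n) (hf : ∀ x, 0 ≤ f x) {Q R : Cube n} (h : Q.toSet ⊆ R.toSet) :
    essInfQ n δ f R ≤ essInfQ n δ f Q := by
  by_contra hc
  have h1 := essInfQ_lt hδ hδn Q (not_le.1 hc)
  have h2 : hContent n δ {x | x ∈ Q.toSet ∧ f x < essInfQ n δ f R} ≤ 0 :=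
    (hContent_mono (F := {x | x ∈ R.toSet ∧ f x < essInfQ n δ f R}) fun x hx => ⟨h hx.1, hx.2⟩).trans
      (essInfQ_null hδ hf R).le
  exact absurd h1 (not_lt.2 h2)

/-- main step of the John-Nirenberg inequality -/
lemma jn_step (hδ : 0 < δ) (hδn : δ ≤ n) (hf : ∀ x, 0 ≤ f x) {ρ : ℝ≥0∞} {l : ℝ} (hl : 0 ≤ l)
    (hρ : ∀ P : Cube n, hContent n δ {x | x ∈ P.toSet ∧ essInfQ n δ f P + l < f x} ≤ ρ * P.sz δ)
    (Q : Cube n) {a : ℝ} (ha : essInfQ n δ f Q ≤ a) {t : ℝ≥0∞}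
    (ht : hContent n δ {x | x ∈ Q.toSet ∧ a < f x} < t) :
    hContent n δ {x | x ∈ Q.toSet ∧ a + l < f x} ≤ ρ * (1 + ENNReal.ofReal (2 ^ δ)) * Cn n δ * t := by
  obtain ⟨S, hS1, hS2⟩ := exists_dyadic_cover hδ Q ht
  set c := essInfQ n δ f with hc
  set Pr : ℤ × (Fin n → ℤ) → Prop := fun p => a < c (dy Q p) with hPr
  have hQ0 : (dy Q (0, 0)).toSet = Q.toSet := by rw [dy_zero]
  -- cubes meeting Q
  have hbig : ∀ q, Q.toSet ⊆ (dy Q q).toSet → ¬ Pr q := by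
    intro q hq
    simp only [hPr, not_lt]
    exact (essInfQ_anti hδ hδn hf hq).trans ha
  have hlev : ∀ q x, x ∈ Q.toSet → x ∈ (dy Q q).toSet → 0 ≤ q.1 → ¬ Pr q := by
    intro q x hxQ hxq h0
    rw [← hQ0] at hxQ
    refine hbig q ?_
    rw [← hQ0]
    exact dy_subset hxQ hxq h0
  set T : Set (ℤ × (Fin n → ℤ)) := {p | IsMaxDy Q Pr p ∧ ((dy Q p).toSet ∩ Q.toSet).Nonempty ∧
    ∀ j, ¬ Pr (S j) → ¬ (dy Q p).toSet ⊆ (dy Q (S j)).toSet} with hT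
  have hsub : {x | x ∈ Q.toSet ∧ a + l < f x ∧ a < f x} ⊆
      (⋃ j : {j // ¬ Pr (S j)}, {x | x ∈ (dy Q (S j)).toSet ∧ c (dy Q (S j)) + l < f x}) ∪
      ⋃ p : T, {x | x ∈ (dy Q p).toSet ∧ a + l < f x} := by
    rintro x ⟨hxQ, hxl, hxa⟩
    obtain ⟨j, hj⟩ := mem_iUnion.1 (hS1 ⟨hxQ, hxa⟩)
    by_cases hP : Pr (S j)
    · obtain ⟨q, hq1, hq2⟩ := exists_max hP 0 fun q hq h0 => hlev q x hxQ (hq hj) h0.le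
      by_cases hT' : ∃ i, ¬ Pr (S i) ∧ (dy Q q).toSet ⊆ (dy Q (S i)).toSet
      · obtain ⟨i, hi1, hi2⟩ := hT'
        refine Or.inl (mem_iUnion.2 ⟨⟨i, hi1⟩, hi2 (hq2 hj), ?_⟩)
        have := not_lt.1 hi1
        simp only
        linarith
      · push Not at hT'
        exact Or.inr (mem_iUnion.2 ⟨⟨q, hq1, ⟨x, hq2 hj, hxQ⟩, hT'⟩, hq2 hj, hxl⟩)
    · refine Or.inl (mem_iUnion.2 ⟨⟨j, hP⟩, hj, ?_⟩)
      have := not_lt.1 hP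
      simp only
      linarith
  have hpack : 1 * ∑' p : T, (dy Q p).sz δ ≤ ∑' j, (dy Q (S j)).sz δ := by
    refine packing Q S T (fun p hp q hq x hxp hxq => hp.1.eq hq.1 hxp hxq) 1 fun p hp => ?_
    obtain ⟨x, hxp, hxQ⟩ := hp.2.1
    have hpQ : (dy Q p).toSet ⊆ Q.toSet := by
      rcases le_total p.1 0 with h | h
      · rw [← hQ0] at hxQ ⊢
        exact dy_subset hxp hxQ h
      · exact absurd hp.1.1 (hlev p x hxQ hxp h)
    have hcov : (dy Q p).toSet ⊆ {x | x ∈ (dy Q p).toSet ∧ f x < c (dy Q p)} ∪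
        ⋃ j : {j // (dy Q (S j)).toSet ⊆ (dy Q p).toSet}, (dy Q (S j)).toSet := by
      intro y hy
      by_cases hfy : f y < c (dy Q p)
      · exact Or.inl ⟨hy, hfy⟩
      refine Or.inr ?_
      have hya : a < f y := lt_of_lt_of_le hp.1.1 (not_lt.1 hfy)
      obtain ⟨j, hj⟩ := mem_iUnion.1 (hS1 ⟨hpQ hy, hya⟩)
      rcases le_or_gt (S j).1 p.1 with h | h
      · exact mem_iUnion.2 ⟨⟨j, dy_subset hj hy h⟩, hj⟩
      · exfalso
        have hs := dy_subset hy hj h.le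
        exact hp.2.2 j (hp.1.2 _ hs h) hs
    rw [one_mul, ← hContent_cube hδ hδn]
    refine (hContent_mono hcov).trans ((hContent_union hδ _ _).trans ?_)
    rw [essInfQ_null hδ hf, zero_add]
    exact (hContent_iUnion hδ _).trans (ENNReal.tsum_le_tsum fun j => hContent_cube_le hδ _)
  rw [one_mul] at hpack
  have hTle : ∀ p : T, hContent n δ {x | x ∈ (dy Q p).toSet ∧ a + l < f x} ≤ ρ * ENNReal.ofReal (2 ^ δ) * (dy Q p).sz δ := by
    rintro ⟨p, hp⟩
    obtain ⟨x, hxp, hxQ⟩ := hp.2.1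
    set q := idx Q (p.1 + 1) x
    have hpq : (dy Q p).toSet ⊆ (dy Q q).toSet := dy_subset_idx hxp (by linarith)
    have hq : ¬ Pr q := hp.1.2 q hpq (lt_add_one p.1)
    have hq' := not_lt.1 hq
    calc _ ≤ hContent n δ {x | x ∈ (dy Q q).toSet ∧ c (dy Q q) + l < f x} :=
          hContent_mono fun y hy => ⟨hpq hy.1, by have := hy.2; linarith⟩
      _ ≤ ρ * (dy Q q).sz δ := hρ _
      _ ≤ ρ * (ENNReal.ofReal (2 ^ δ) * (dy Q p).sz δ) := by
          gcongr
          refine Cube.sz_le_of_side_le hδ (by norm_num) ?_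
          rw [dy_side, dy_side]
          have : q.1 = p.1 + 1 := rfl
          rw [this, zpow_add_one₀ two_ne_zero]
          linarith
      _ = _ := by ring
  have hsub' : {x | x ∈ Q.toSet ∧ a + l < f x} ⊆ {x | x ∈ Q.toSet ∧ a + l < f x ∧ a < f x} :=
    fun x hx => ⟨hx.1, hx.2, by have := hx.2; linarith⟩
  calc _ ≤ _ := hContent_mono (hsub'.trans hsub)
    _ ≤ _ := hContent_union hδ _ _
    _ ≤ (∑' j : {j // ¬ Pr (S j)}, ρ * (dy Q (S j)).sz δ) + ∑' p : T, ρ * ENNReal.ofReal (2 ^ δ) * (dy Q p).sz δ := by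
        gcongr
        · exact (hContent_iUnion hδ _).trans (ENNReal.tsum_le_tsum fun j => hρ _)
        · exact (hContent_iUnion hδ _).trans (ENNReal.tsum_le_tsum fun p => hTle p)
    _ ≤ (∑' j, ρ * (dy Q (S j)).sz δ) + ρ * ENNReal.ofReal (2 ^ δ) * ∑' p : T, (dy Q p).sz δ := by
        rw [ENNReal.tsum_mul_left (a := ρ * ENNReal.ofReal (2 ^ δ))]
        gcongr
        exact ENNReal.tsum_comp_le_tsum_of_injective Subtype.val_injective (fun j => ρ * (dy Q (S j)).sz δ)
    _ ≤ ρ * (Cn n δ * t) + ρ * ENNReal.ofReal (2 ^ δ) * (Cn n δ * t) := by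
        rw [ENNReal.tsum_mul_left]
        gcongr
        exact hpack.trans hS2
    _ = _ := by ring

lemma jn_half (hδ : 0 < δ) (hδn : δ ≤ n) (hf : ∀ x, 0 ≤ f x) {B : ℝ≥0∞} (hB : B ≠ ⊤)
    (hblo : ∀ Q : Cube n, integH n δ (fun x => |f x - essInfQ n δ f Q|) Q.toSet ≤ B * Q.sz δ) :
    ∃ l : ℝ, 0 < l ∧ ∀ (Q : Cube n) (a : ℝ), essInfQ n δ f Q ≤ a →
      2 * hContent n δ {x | x ∈ Q.toSet ∧ a + l < f x} ≤ hContent n δ {x | x ∈ Q.toSet ∧ a < f x} := by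
  obtain ⟨ρ, hρ0, hρ, -⟩ := ENNReal.exists_pos_mul_le (D := (1 + ENNReal.ofReal (2 ^ δ)) * Cn n δ) (η := 1/2)
    (ENNReal.mul_ne_top (by simp) Cn_ne_top) (by simp)
  have hρ0' : ENNReal.ofReal ρ ≠ 0 := by simpa using hρ0
  set l := (B / ENNReal.ofReal ρ).toReal + 1 with hl
  have hl0 : 0 < l := by positivity
  have hBl : B ≤ ENNReal.ofReal ρ * ENNReal.ofReal l := by
    rw [mul_comm, ← ENNReal.div_le_iff hρ0' ENNReal.ofReal_ne_top,
      ← ENNReal.ofReal_toReal (ENNReal.div_ne_top hB hρ0')]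
    exact ENNReal.ofReal_le_ofReal (by linarith)
  have key : ∀ P : Cube n, hContent n δ {x | x ∈ P.toSet ∧ essInfQ n δ f P + l < f x} ≤ ENNReal.ofReal ρ * P.sz δ := by
    intro P
    have h1 := integH_cheb (δ := δ) (fun x => |f x - essInfQ n δ f P|) P.toSet l
    have h2 : hContent n δ {x | x ∈ P.toSet ∧ essInfQ n δ f P + l < f x} ≤
        hContent n δ {x | x ∈ P.toSet ∧ l < |f x - essInfQ n δ f P|} :=
      hContent_mono fun x hx => ⟨hx.1, lt_of_lt_of_le (by have := hx.2; linarith) (le_abs_self _)⟩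
    rw [← ENNReal.mul_le_mul_iff_right (ENNReal.ofReal_pos.2 hl0).ne' ENNReal.ofReal_ne_top]
    calc _ ≤ _ := mul_le_mul_right h2 _
      _ ≤ _ := h1.trans (hblo P)
      _ ≤ ENNReal.ofReal ρ * ENNReal.ofReal l * P.sz δ := by gcongr
      _ = _ := by ring
  refine ⟨l, hl0, fun Q a ha => ?_⟩
  by_contra hc
  obtain ⟨t, ht1, ht2⟩ := exists_between (not_le.1 hc)
  have h1 := jn_step hδ hδn hf hl0.le key Q ha ht1
  refine absurd ht2 (not_lt.2 ?_)
  calc _ ≤ 2 * (ENNReal.ofReal ρ * (1 + ENNReal.ofReal (2 ^ δ)) * Cn n δ * t) := by gcongr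
    _ = 2 * ((1 + ENNReal.ofReal (2 ^ δ)) * Cn n δ * ENNReal.ofReal ρ) * t := by ring
    _ ≤ 2 * (1/2) * t := by gcongr
    _ = t := by rw [one_div, ENNReal.mul_inv_cancel (by simp) (by simp), one_mul]

lemma jn (hδ : 0 < δ) (hδn : δ ≤ n) (hf : ∀ x, 0 ≤ f x) {B : ℝ≥0∞} (hB : B ≠ ⊤)
    (hblo : ∀ Q : Cube n, integH n δ (fun x => |f x - essInfQ n δ f Q|) Q.toSet ≤ B * Q.sz δ) :
    ∃ e : ℝ, 0 < e ∧ ∀ (Q : Cube n) (s : ℝ), 0 ≤ s →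
      hContent n δ {x | x ∈ Q.toSet ∧ essInfQ n δ f Q + s < f x} ≤ ENNReal.ofReal (2 * Real.exp (-(2 * e * s))) * Q.sz δ := by
  obtain ⟨l, hl0, hl⟩ := jn_half hδ hδn hf hB hblo
  have hlog : 0 < Real.log 2 := Real.log_pos (by norm_num)
  refine ⟨Real.log 2 / (2 * l), by positivity, fun Q s hs => ?_⟩
  have hit : ∀ m : ℕ, 2 ^ m * hContent n δ {x | x ∈ Q.toSet ∧ essInfQ n δ f Q + m * l < f x} ≤ Q.sz δ := by
    intro m
    induction m with
    | zero =>
      simp only [pow_zero, one_mul]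
      exact (hContent_mono fun x hx => hx.1).trans (hContent_cube_le hδ Q)
    | succ m ih =>
      refine le_trans ?_ ih
      have := hl Q (essInfQ n δ f Q + m * l) (by have : 0 ≤ (m:ℝ) * l := by positivity
                                                 linarith)
      rw [pow_succ, mul_assoc]
      gcongr
      refine le_trans ?_ this
      push_cast
      rw [add_mul, one_mul, add_assoc]
  set m := ⌊s / l⌋₊ with hm
  have hm1 : (m:ℝ) * l ≤ s := by
    rw [← le_div_iff₀ hl0]; exact Nat.floor_le (by positivity)
  have hm2 : s / l < m + 1 := Nat.lt_floor_add_one _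
  have h1 : hContent n δ {x | x ∈ Q.toSet ∧ essInfQ n δ f Q + s < f x} ≤
      hContent n δ {x | x ∈ Q.toSet ∧ essInfQ n δ f Q + m * l < f x} :=
    hContent_mono fun x hx => ⟨hx.1, by have := hx.2; linarith⟩
  have h2 : (1:ℝ≥0∞) ≤ ENNReal.ofReal (2 * Real.exp (-(2 * (Real.log 2 / (2 * l)) * s))) * 2 ^ m := by
    have e2 : (2:ℝ≥0∞) ^ m = ENNReal.ofReal (2 ^ m) := by
      rw [ENNReal.ofReal_pow (by norm_num)]; simp
    rw [e2, ← ENNReal.ofReal_mul (by positivity), ← ENNReal.ofReal_one]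
    apply ENNReal.ofReal_le_ofReal
    have e3 : (2:ℝ) ^ m = Real.exp (m * Real.log 2) := by
      rw [Real.exp_nat_mul, Real.exp_log (by norm_num)]
    have e4 : 2 * Real.exp (-(2 * (Real.log 2 / (2 * l)) * s)) * 2 ^ m =
        Real.exp (Real.log 2 * (1 + m - s / l)) := by
      rw [e3]
      nth_rw 1 [← Real.exp_log (by norm_num : (0:ℝ) < 2)]
      rw [← Real.exp_add, ← Real.exp_add]
      congr 1
      field_simp
      ring
    rw [e4, Real.one_le_exp_iff]
    refine mul_nonneg hlog.le ?_
    linarith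
  calc _ ≤ _ := h1
    _ ≤ (ENNReal.ofReal (2 * Real.exp (-(2 * (Real.log 2 / (2 * l)) * s))) * 2 ^ m) * hContent n δ {x | x ∈ Q.toSet ∧ essInfQ n δ f Q + m * l < f x} :=
        le_mul_of_one_le_left' h2
    _ = ENNReal.ofReal (2 * Real.exp (-(2 * (Real.log 2 / (2 * l)) * s))) * (2 ^ m * hContent n δ {x | x ∈ Q.toSet ∧ essInfQ n δ f Q + m * l < f x}) := by ring
    _ ≤ _ := by gcongr; exact hit m

end essInf

end Part4


section Part5
open scoped ENNReal Topology
open Set MeasureTheory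

variable {n : ℕ} {δ : ℝ} {f : (Fin n → ℝ) → ℝ}

lemma lintegral_inv_sq {c k : ℝ} (hc : 0 < c) (hk : 0 ≤ k) :
    ∫⁻ t in Ioi c, ENNReal.ofReal (k * t ^ (-2:ℝ)) = ENNReal.ofReal (k / c) := by
  rw [← ofReal_integral_eq_lintegral_ofReal]
  · congr 1
    rw [integral_const_mul, integral_Ioi_rpow_of_lt (by norm_num) hc]
    rw [show (-2:ℝ) + 1 = -1 by norm_num, Real.rpow_neg_one]
    field_simp
  · exact (integrableOn_Ioi_rpow_of_lt (by norm_num) hc).const_mul k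
  · refine (ae_restrict_iff' measurableSet_Ioi).2 (Filter.Eventually.of_forall fun t ht => ?_)
    have : 0 < t := hc.trans ht
    simp only [Pi.zero_apply]
    positivity

lemma integH_exp_le (hδ : 0 < δ) {e A θ T : ℝ} (he : 0 < e) (hθ : 0 ≤ θ) (hT : 1 ≤ T) (Q : Cube n)
    (h1 : ∀ s : ℝ, 0 ≤ s → hContent n δ {x | x ∈ Q.toSet ∧ A + s < f x} ≤ ENNReal.ofReal θ * Q.sz δ)
    (h2 : ∀ s : ℝ, 0 ≤ s → hContent n δ {x | x ∈ Q.toSet ∧ A + s < f x} ≤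
      ENNReal.ofReal (2 * Real.exp (-(2 * e * s))) * Q.sz δ) :
    integH n δ (fun x => |Real.exp (e * f x)|) Q.toSet ≤
      ENNReal.ofReal (Real.exp (e * A) * (1 + θ * T + 2 / T)) * Q.sz δ := by
  set G := Real.exp (e * A) with hG
  have hG0 : 0 < G := Real.exp_pos _
  have hT0 : 0 < T := by linarith
  have hGT : G ≤ T * G := by nlinarith
  have hset : ∀ t, G ≤ t → {x | x ∈ Q.toSet ∧ t < |Real.exp (e * f x)|} ⊆
      {x | x ∈ Q.toSet ∧ A + (Real.log t / e - A) < f x} := by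
    rintro t ht x ⟨hx, hlt⟩
    refine ⟨hx, ?_⟩
    have ht0 : 0 < t := hG0.trans_le ht
    rw [abs_of_pos (Real.exp_pos _), ← Real.log_lt_iff_lt_exp ht0] at hlt
    have : Real.log t / e < f x := by rw [div_lt_iff₀ he]; linarith
    linarith
  have hs : ∀ t, G ≤ t → 0 ≤ Real.log t / e - A := by
    intro t ht
    have := (Real.le_log_iff_exp_le (hG0.trans_le ht)).2 ht
    rw [sub_nonneg, le_div_iff₀ he]; linarith
  have hsplit : Ioi (0:ℝ) = Ioc 0 G ∪ (Ioc G (T * G) ∪ Ioi (T * G)) := by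
    rw [Ioc_union_Ioi_eq_Ioi hGT, Ioc_union_Ioi_eq_Ioi hG0.le]
  have I1 : ∫⁻ t in Ioc 0 G, hContent n δ {x | x ∈ Q.toSet ∧ t < |Real.exp (e * f x)|} ≤ ENNReal.ofReal G * Q.sz δ := by
    calc _ ≤ ∫⁻ _ in Ioc 0 G, Q.sz δ := lintegral_mono fun t =>
          (hContent_mono fun x hx => hx.1).trans (hContent_cube_le hδ Q)
      _ = _ := by rw [lintegral_const, Measure.restrict_apply_univ, Real.volume_Ioc, sub_zero, mul_comm]
  have I2 : ∫⁻ t in Ioc G (T * G), hContent n δ {x | x ∈ Q.toSet ∧ t < |Real.exp (e * f x)|} ≤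
      ENNReal.ofReal (G * (θ * T)) * Q.sz δ := by
    calc _ ≤ ∫⁻ _ in Ioc G (T * G), ENNReal.ofReal θ * Q.sz δ := setLIntegral_mono' measurableSet_Ioc fun t ht =>
          (hContent_mono (hset t ht.1.le)).trans (h1 _ (hs t ht.1.le))
      _ = ENNReal.ofReal θ * Q.sz δ * ENNReal.ofReal (T * G - G) := by
          rw [lintegral_const, Measure.restrict_apply_univ, Real.volume_Ioc]
      _ ≤ ENNReal.ofReal θ * Q.sz δ * ENNReal.ofReal (T * G) := by gcongr; linarith
      _ = _ := by
          rw [mul_right_comm, ← ENNReal.ofReal_mul hθ]; congr 2; ring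
  have I3 : ∫⁻ t in Ioi (T * G), hContent n δ {x | x ∈ Q.toSet ∧ t < |Real.exp (e * f x)|} ≤
      ENNReal.ofReal (G * (2 / T)) * Q.sz δ := by
    calc _ ≤ ∫⁻ t in Ioi (T * G), ENNReal.ofReal (2 * G ^ 2 * t ^ (-2:ℝ)) * Q.sz δ := by
          refine setLIntegral_mono' measurableSet_Ioi fun t ht => ?_
          have htG : G ≤ t := hGT.trans (le_of_lt ht)
          have ht0 : 0 < t := hG0.trans_le htG
          refine (hContent_mono (hset t htG)).trans ((h2 _ (hs t htG)).trans (le_of_eq ?_))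
          congr 2
          rw [mul_assoc 2 (G ^ 2)]
          congr 1
          have e1 : t ^ (-2:ℝ) = Real.exp (-2 * Real.log t) := by
            rw [Real.rpow_def_of_pos ht0]; ring_nf
          rw [e1, hG, ← Real.exp_nat_mul, ← Real.exp_add]
          congr 1
          field_simp
          push_cast
          ring
      _ = ENNReal.ofReal (2 * G ^ 2 / (T * G)) * Q.sz δ := by
          rw [lintegral_mul_const' _ _ Q.sz_ne_top, lintegral_inv_sq (by positivity) (by positivity)]
      _ = _ := by
          congr 2; field_simp
  unfold integH
  rw [hsplit]
  calc _ ≤ _ := lintegral_union_le _ _ _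
    _ ≤ _ := add_le_add I1 ((lintegral_union_le _ _ _).trans (add_le_add I2 I3))
    _ = _ := by
        rw [← add_mul, ← add_mul, ← ENNReal.ofReal_add (by positivity) (by positivity),
          ← ENNReal.ofReal_add (by positivity) (by positivity)]
        congr 2; ring

lemma maxOp_le_iff (hδ : 0 < δ) (hδn : δ ≤ n) {g : (Fin n → ℝ) → ℝ} {x : Fin n → ℝ} {c : ℝ≥0∞} :
    maxOp n δ g x ≤ c ↔ ∀ Q : Cube n, x ∈ Q.toSet → integH n δ (fun y => |g y|) Q.toSet ≤ c * Q.sz δ := by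
  unfold maxOp
  simp only [iSup_le_iff]
  refine forall_congr' fun Q => forall_congr' fun _ => ?_
  rw [hContent_cube hδ hδn, ENNReal.div_le_iff Q.sz_pos.ne' Q.sz_ne_top]

lemma integH_le_maxOp (hδ : 0 < δ) (hδn : δ ≤ n) {g : (Fin n → ℝ) → ℝ} {x : Fin n → ℝ} {Q : Cube n}
    (hx : x ∈ Q.toSet) : integH n δ (fun y => |g y|) Q.toSet ≤ maxOp n δ g x * Q.sz δ :=
  (maxOp_le_iff hδ hδn).1 le_rfl Q hx

lemma integH_le_maxOp_near (hδ : 0 < δ) (hδn : δ ≤ n) {g : (Fin n → ℝ) → ℝ} {x y : Fin n → ℝ} {Q : Cube n}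
    (hx : x ∈ Q.toSet) : integH n δ (fun y => |g y|) Q.toSet ≤
      ENNReal.ofReal ((1 + 2 * dist x y / Q.side) ^ δ) * maxOp n δ g y * Q.sz δ := by
  have hQ := Q.side_pos
  have hd : 0 ≤ dist x y := dist_nonneg
  set Q' : Cube n := ⟨fun i => Q.corner i - dist x y, Q.side + 2 * dist x y, by positivity⟩ with hQ'
  have hy : y ∈ Q'.toSet := by
    intro i
    have h1 := dist_le_pi_dist x y i
    rw [Real.dist_eq, abs_le] at h1
    have := hx i
    simp only [hQ']
    constructor <;> linarith
  have hsub : Q.toSet ⊆ Q'.toSet := by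
    intro z hz i
    have := hz i
    simp only [hQ']
    constructor <;> linarith
  calc _ ≤ integH n δ (fun y => |g y|) Q'.toSet := integH_mono hsub fun _ _ => le_rfl
    _ ≤ maxOp n δ g y * Q'.sz δ := integH_le_maxOp hδ hδn hy
    _ ≤ maxOp n δ g y * (ENNReal.ofReal ((1 + 2 * dist x y / Q.side) ^ δ) * Q.sz δ) := by
        gcongr
        refine Cube.sz_le_of_side_le hδ (by positivity) (le_of_eq ?_)
        simp only [hQ']
        field_simp
    _ = _ := by ring

lemma maxOp_lsc (hδ : 0 < δ) (hδn : δ ≤ n) {g : (Fin n → ℝ) → ℝ} {x : Fin n → ℝ} {c : ℝ≥0∞}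
    (hc : c < maxOp n δ g x) : ∀ᶠ y in 𝓝 x, c < maxOp n δ g y := by
  obtain ⟨Q, hxQ, hQ⟩ : ∃ Q : Cube n, x ∈ Q.toSet ∧ c * Q.sz δ < integH n δ (fun y => |g y|) Q.toSet := by
    by_contra h
    push Not at h
    exact absurd hc (not_lt.2 ((maxOp_le_iff hδ hδn).2 h))
  have hQp := Q.side_pos
  have hct : c ≠ ⊤ := ne_top_of_lt hc
  have hcont : Filter.Tendsto (fun y => ENNReal.ofReal ((1 + 2 * dist x y / Q.side) ^ δ) * (c * Q.sz δ)) (𝓝 x)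
      (𝓝 (c * Q.sz δ)) := by
    have h1 : Continuous fun y => (1 + 2 * dist x y / Q.side) ^ δ := by
      refine Continuous.rpow_const (by fun_prop) fun y => Or.inr hδ.le
    have h2 := (ENNReal.continuous_ofReal.comp h1).tendsto x
    have h3 := ENNReal.Tendsto.mul_const (b := c * Q.sz δ) h2 (Or.inr (ENNReal.mul_ne_top hct Q.sz_ne_top))
    simpa using h3
  filter_upwards [hcont.eventually_lt_const hQ] with y hy
  have h1 := hy.trans_le (integH_le_maxOp_near hδ hδn (y := y) hxQ)
  by_contra hle
  refine absurd h1 (not_lt.2 ?_)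
  rw [mul_assoc]
  gcongr
  exact not_lt.1 hle

lemma dens_cube (hδ : 0 < δ) (hδn : δ ≤ n) {u : (Fin n → ℝ) → ℝ} {x : Fin n → ℝ} (hx : DensPt n δ u x)
    {Q : Cube n} (hxQ : x ∈ Q.toSet) {η θ : ℝ} (hη : 0 < η) (hθ : 0 < θ) :
    ∃ R : Cube n, x ∈ R.toSet ∧ R.toSet ⊆ Q.toSet ∧
      R.sz δ ≤ hContent n δ (R.toSet ∩ {y | |u y - u x| < η}) + ENNReal.ofReal θ * R.sz δ := by
  obtain ⟨r, hr, hr2⟩ := hx η hη θ hθ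
  have hev : ∀ᶠ ρ in 𝓝[>] (0:ℝ), ∀ i, x i + ρ < Q.corner i + Q.side := by
    rw [Filter.eventually_all]
    intro i
    have : Filter.Tendsto (fun ρ : ℝ => x i + ρ) (𝓝[>] 0) (𝓝 (x i + 0)) :=
      (Continuous.tendsto (by fun_prop) 0).mono_left nhdsWithin_le_nhds
    exact this.eventually_lt_const (by rw [add_zero]; exact (hxQ i).2)
  have hev2 : ∀ᶠ ρ in 𝓝[>] (0:ℝ), ρ < r := nhdsWithin_le_nhds (Iio_mem_nhds hr)
  have hev3 : ∀ᶠ ρ in 𝓝[>] (0:ℝ), 0 < ρ := self_mem_nhdsWithin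
  obtain ⟨ρ, h1, h2, h3⟩ := (hev.and (hev2.and hev3)).exists
  set R : Cube n := ⟨x, ρ, h3⟩ with hR
  have hxR : x ∈ R.toSet := R.corner_mem
  refine ⟨R, hxR, ?_, ?_⟩
  · intro y hy i
    have := hy i
    have := hxQ i
    have := h1 i
    simp only [hR] at *
    constructor <;> linarith
  · calc R.sz δ = hContent n δ R.toSet := (hContent_cube hδ hδn R).symm
      _ ≤ hContent n δ ((R.toSet ∩ {y | |u y - u x| < η}) ∪ (R.toSet ∩ {y | η ≤ |u y - u x|})) := by
          refine hContent_mono fun y hy => ?_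
          rcases lt_or_ge |u y - u x| η with h | h
          · exact Or.inl ⟨hy, h⟩
          · exact Or.inr ⟨hy, h⟩
      _ ≤ _ := (hContent_union hδ _ _).trans (add_le_add le_rfl (hr2 R hxR h2))

/-- A unit cube at a point. -/
def unitCube (x : Fin n → ℝ) : Cube n := ⟨x, 1, one_pos⟩

lemma essInfQ_le_of_dens (hδ : 0 < δ) (hδn : δ ≤ n) (hf : ∀ x, 0 ≤ f x) {x : Fin n → ℝ} (hx : DensPt n δ f x)
    {Q : Cube n} (hxQ : x ∈ Q.toSet) : essInfQ n δ f Q ≤ f x := by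
  refine le_of_forall_pos_le_add fun η hη => ?_
  obtain ⟨R, hxR, hRQ, hR⟩ := dens_cube hδ hδn hx hxQ hη (θ := 1/2) (by norm_num)
  refine essInfQ_le Q (by have := hf x; linarith) ?_
  have hpos : 0 < hContent n δ (R.toSet ∩ {y | |f y - f x| < η}) := by
    rw [pos_iff_ne_zero]
    intro h0
    rw [h0, zero_add] at hR
    have : ENNReal.ofReal (1/2) * R.sz δ < 1 * R.sz δ := by
      refine ENNReal.mul_lt_mul_left R.sz_pos.ne' R.sz_ne_top ?_
      rw [← ENNReal.ofReal_one]
      exact (ENNReal.ofReal_lt_ofReal_iff one_pos).2 (by norm_num)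
    rw [one_mul] at this
    exact absurd hR (not_le.2 this)
  refine hpos.trans_le (hContent_mono fun y hy => ⟨hRQ hy.1, ?_⟩)
  have hyy : |f y - f x| < η := hy.2
  have := (abs_lt.1 hyy).2
  linarith

lemma le_maxOp_of_dens (hδ : 0 < δ) (hδn : δ ≤ n) {e : ℝ} (he : 0 < e) {x : Fin n → ℝ} (hx : DensPt n δ f x) :
    ENNReal.ofReal (Real.exp (e * f x)) ≤ maxOp n δ (fun y => Real.exp (e * f y)) x := by
  have key : ∀ η : ℝ, 0 < η → η < 1 → ENNReal.ofReal (Real.exp (e * (f x - η)) * (1 - η)) ≤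
      maxOp n δ (fun y => Real.exp (e * f y)) x := by
    intro η hη hη1
    obtain ⟨R, hxR, -, hR⟩ := dens_cube hδ hδn hx (unitCube x).corner_mem hη hη
    have h1 := integH_cheb (δ := δ) (fun y => |Real.exp (e * f y)|) R.toSet (Real.exp (e * (f x - η)))
    have h2 := h1.trans (integH_le_maxOp hδ hδn (g := fun y => Real.exp (e * f y)) hxR)
    have h3 : hContent n δ (R.toSet ∩ {y | |f y - f x| < η}) ≤
        hContent n δ {y | y ∈ R.toSet ∧ Real.exp (e * (f x - η)) < |Real.exp (e * f y)|} := by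
      refine hContent_mono fun y hy => ⟨hy.1, ?_⟩
      rw [abs_of_pos (Real.exp_pos _), Real.exp_lt_exp]
      have hyy : |f y - f x| < η := hy.2
      have := (abs_lt.1 hyy).1
      exact mul_lt_mul_of_pos_left (by linarith) he
    have h4 : ENNReal.ofReal (1 - η) * R.sz δ ≤ hContent n δ (R.toSet ∩ {y | |f y - f x| < η}) := by
      rw [ENNReal.ofReal_sub _ hη.le, ENNReal.ofReal_one, ENNReal.sub_mul (fun _ _ => R.sz_ne_top), one_mul]
      exact tsub_le_iff_right.2 hR
    rw [← ENNReal.mul_le_mul_iff_left R.sz_pos.ne' R.sz_ne_top (c := R.sz δ), ENNReal.ofReal_mul (Real.exp_pos _).le, mul_assoc]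
    refine le_trans ?_ h2
    gcongr
    exact h4.trans h3
  have hlim : Filter.Tendsto (fun η : ℝ => ENNReal.ofReal (Real.exp (e * (f x - η)) * (1 - η))) (𝓝[>] 0)
      (𝓝 (ENNReal.ofReal (Real.exp (e * (f x - 0)) * (1 - 0)))) := by
    refine Filter.Tendsto.mono_left (Continuous.tendsto ?_ 0) nhdsWithin_le_nhds
    exact ENNReal.continuous_ofReal.comp (by fun_prop)
  rw [sub_zero, sub_zero, mul_one] at hlim
  refine le_of_tendsto hlim ?_
  filter_upwards [self_mem_nhdsWithin, nhdsWithin_le_nhds (Iio_mem_nhds one_pos)] with η h1 h2 using key η h1 h2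

end Part5


section Part6
open scoped ENNReal Topology
open Set MeasureTheory

variable {n : ℕ} {δ : ℝ} {f : (Fin n → ℝ) → ℝ}

lemma hjn_shift {e A : ℝ}
    (hjn : ∀ (Q : Cube n) (s : ℝ), 0 ≤ s → hContent n δ {x | x ∈ Q.toSet ∧ essInfQ n δ f Q + s < f x} ≤
      ENNReal.ofReal (2 * Real.exp (-(2 * e * s))) * Q.sz δ) {Q : Cube n} (hA : essInfQ n δ f Q ≤ A)
    (s : ℝ) (hs : 0 ≤ s) : hContent n δ {x | x ∈ Q.toSet ∧ A + s < f x} ≤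
      ENNReal.ofReal (2 * Real.exp (-(2 * e * s))) * Q.sz δ := by
  refine le_trans (hContent_mono fun x hx => ?_) (hjn Q s hs)
  exact ⟨hx.1, lt_of_le_of_lt (by linarith) hx.2⟩

lemma integH_exp_le4 (hδ : 0 < δ) {e A : ℝ} (he : 0 < e)
    (hjn : ∀ (Q : Cube n) (s : ℝ), 0 ≤ s → hContent n δ {x | x ∈ Q.toSet ∧ essInfQ n δ f Q + s < f x} ≤
      ENNReal.ofReal (2 * Real.exp (-(2 * e * s))) * Q.sz δ) {Q : Cube n} (hA : essInfQ n δ f Q ≤ A) :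
    integH n δ (fun x => |Real.exp (e * f x)|) Q.toSet ≤
      ENNReal.ofReal (4 * Real.exp (e * A)) * Q.sz δ := by
  refine (integH_exp_le hδ he zero_le_one le_rfl Q (fun s _ => ?_) (hjn_shift hjn hA)).trans (le_of_eq ?_)
  · rw [ENNReal.ofReal_one, one_mul]
    exact (hContent_mono fun x hx => hx.1).trans (hContent_cube_le hδ Q)
  · congr 2; ring

lemma maxOp_le_of_dens (hδ : 0 < δ) (hδn : δ ≤ n) (hf : ∀ x, 0 ≤ f x) {e : ℝ} (he : 0 < e)
    (hjn : ∀ (Q : Cube n) (s : ℝ), 0 ≤ s → hContent n δ {x | x ∈ Q.toSet ∧ essInfQ n δ f Q + s < f x} ≤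
      ENNReal.ofReal (2 * Real.exp (-(2 * e * s))) * Q.sz δ) {x : Fin n → ℝ} (hx : DensPt n δ f x) :
    maxOp n δ (fun y => Real.exp (e * f y)) x ≤ ENNReal.ofReal (4 * Real.exp (e * f x)) :=
  (maxOp_le_iff hδ hδn).2 fun _ hxQ => integH_exp_le4 hδ he hjn (essInfQ_le_of_dens hδ hδn hf hx hxQ)

lemma maxOp_usc (hδ : 0 < δ) (hδn : δ ≤ n) (hf : ∀ x, 0 ≤ f x) {e : ℝ} (he : 0 < e)
    (hjn : ∀ (Q : Cube n) (s : ℝ), 0 ≤ s → hContent n δ {x | x ∈ Q.toSet ∧ essInfQ n δ f Q + s < f x} ≤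
      ENNReal.ofReal (2 * Real.exp (-(2 * e * s))) * Q.sz δ)
    {O : ℕ → Set (Fin n → ℝ)} {U : Set (Fin n → ℝ)} (hOU : ∀ k, O k ⊆ U)
    (hc : ∀ k, ContinuousOn f (O k)ᶜ)
    (hd : ∀ k, ∀ x ∉ U, ∀ Q : Cube n, x ∈ Q.toSet →
        hContent n δ (Q.toSet ∩ O k) ≤ ENNReal.ofReal ((1/2) ^ k) * Q.sz δ)
    {x : Fin n → ℝ} (hxU : x ∉ U) (hx : DensPt n δ f x) {τ : ℝ} (hτ : 1 < τ) :
    ∃ r > 0, ∀ y, y ∉ U → DensPt n δ f y → dist y x < r →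
      maxOp n δ (fun y => Real.exp (e * f y)) y ≤
        ENNReal.ofReal τ * maxOp n δ (fun y => Real.exp (e * f y)) x := by
  obtain ⟨j, hj⟩ : ∃ j : ℕ, Real.exp (e * (1/2:ℝ) ^ j) * (1 + 3 * (1/2:ℝ) ^ j) < τ := by
    have h1 : Filter.Tendsto (fun j : ℕ => (1/2:ℝ) ^ j) Filter.atTop (𝓝 0) :=
      tendsto_pow_atTop_nhds_zero_of_lt_one (by norm_num) (by norm_num)
    have h2 : Continuous fun t : ℝ => Real.exp (e * t) * (1 + 3 * t) := by fun_prop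
    have h3 := (h2.tendsto 0).comp h1
    have h4 : Real.exp (e * 0) * (1 + 3 * 0) < τ := by simpa using hτ
    exact (h3.eventually_lt_const h4).exists
  set η := (1/2:ℝ) ^ j with hη
  have hη0 : 0 < η := by positivity
  obtain ⟨r, hr, hr2⟩ := Metric.continuousWithinAt_iff.1 (hc (2 * j) x (fun h => hxU (hOU _ h))) η hη0
  obtain ⟨r2, hr20, hr22⟩ : ∃ r2 > 0, ∀ d : ℝ, |d| < r2 → (1 + 2 * d / (r/2)) ^ δ < τ := by
    have h1 : Continuous fun d : ℝ => (1 + 2 * d / (r/2)) ^ δ :=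
      Continuous.rpow_const (by fun_prop) fun y => Or.inr hδ.le
    have h2 := (h1.tendsto 0).eventually_lt_const (show _ < τ by simpa using hτ)
    obtain ⟨r2, h3, h4⟩ := Metric.eventually_nhds_iff.1 h2
    exact ⟨r2, h3, fun d hd => h4 (by simpa [Real.dist_eq] using hd)⟩
  refine ⟨min (r/2) r2, by positivity, fun y hyU hy hyx => (maxOp_le_iff hδ hδn).2 fun Q hyQ => ?_⟩
  have hyr : dist y x < r/2 := hyx.trans_le (min_le_left _ _)
  have hyr2 : dist y x < r2 := hyx.trans_le (min_le_right _ _)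
  have hd0 : 0 ≤ dist y x := dist_nonneg
  rcases le_or_gt (r/2) Q.side with hs | hs
  · refine (integH_le_maxOp_near hδ hδn (y := x) hyQ).trans ?_
    gcongr
    refine le_trans ?_ (hr22 (dist y x) (by rwa [abs_of_nonneg hd0])).le
    have := Q.side_pos
    gcongr
  · have hfy : f y ≤ f x + η := by
      have := hr2 (x := y) (fun h => hyU (hOU _ h)) (by linarith)
      rw [Real.dist_eq, abs_lt] at this
      linarith
    have hA := (essInfQ_le_of_dens hδ hδn hf hy hyQ).trans hfy
    have hT : (1:ℝ) ≤ 2 ^ j := one_le_pow₀ (by norm_num)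
    have h := integH_exp_le (f := f) hδ he (A := f x + η) (θ := (1/2) ^ (2 * j)) (by positivity) hT Q
      (fun s hs0 => ?_) (hjn_shift hjn hA)
    · refine h.trans ?_
      gcongr
      calc ENNReal.ofReal (Real.exp (e * (f x + η)) * (1 + (1 / 2) ^ (2 * j) * 2 ^ j + 2 / 2 ^ j))
          ≤ ENNReal.ofReal (τ * Real.exp (e * f x)) := by
            apply ENNReal.ofReal_le_ofReal
            have e1 : (1 / 2 : ℝ) ^ (2 * j) * 2 ^ j = η := by
              rw [hη, two_mul, pow_add, mul_assoc, ← mul_pow]; norm_num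
            have e2 : (2:ℝ) / 2 ^ j = 2 * η := by
              rw [hη, one_div, inv_pow]; rfl
            rw [e1, e2, mul_add e, Real.exp_add]
            have := Real.exp_pos (e * f x)
            nlinarith
        _ = ENNReal.ofReal τ * ENNReal.ofReal (Real.exp (e * f x)) := ENNReal.ofReal_mul (by linarith)
        _ ≤ _ := by gcongr; exact le_maxOp_of_dens hδ hδn he hx
    · refine (hContent_mono ?_).trans (hd (2 * j) y hyU Q hyQ)
      rintro z ⟨hz, hlt⟩
      refine ⟨hz, ?_⟩
      by_contra hzO
      have h1 : dist z x < r := by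
        have := dist_triangle z y x
        have := Cube.dist_lt hz hyQ
        linarith
      have := hr2 hzO h1
      rw [Real.dist_eq, abs_lt] at this
      linarith

lemma quasiCont_log_maxOp (hn : 1 ≤ n) (hδ : 0 < δ) (hδn : δ ≤ n) (hf : ∀ x, 0 ≤ f x)
    (hq : QuasiCont n δ f) {e : ℝ} (he : 0 < e)
    (hjn : ∀ (Q : Cube n) (s : ℝ), 0 ≤ s → hContent n δ {x | x ∈ Q.toSet ∧ essInfQ n δ f Q + s < f x} ≤
      ENNReal.ofReal (2 * Real.exp (-(2 * e * s))) * Q.sz δ) :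
    QuasiCont n δ (fun x => Real.log (maxOp n δ (fun y => Real.exp (e * f y)) x).toReal) := by
  intro ε hε
  obtain ⟨O, U, hUo, hU, hOU, hc, hd⟩ := quasi_density hn hδ hq (ε := ENNReal.ofReal (ε/3)) (by simpa using hε)
  obtain ⟨t, ht0, ht, -⟩ := ENNReal.exists_pos_mul_le (D := ENNReal.ofReal (3 ^ δ)) (η := ENNReal.ofReal (ε/3))
    ENNReal.ofReal_ne_top (by simpa using hε)
  have hN : hContent n δ {x | ¬ DensPt n δ f x} < ENNReal.ofReal t := by
    have : hContent n δ {x | ¬ DensPt n δ f x} = 0 := densPt_ae hn hδ hq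
    rw [this]; simpa using ht0
  obtain ⟨V, hVo, hNV, hV⟩ := hContent_exists_open hδ hN
  have hnd : ∀ x ∈ (U ∪ V)ᶜ, x ∉ U ∧ DensPt n δ f x := fun x hx =>
    ⟨fun h => hx (Or.inl h), by by_contra h; exact hx (Or.inr (hNV h))⟩
  refine ⟨U ∪ V, hUo.union hVo, ?_, ?_⟩
  · calc _ ≤ _ := hContent_union hδ U V
      _ ≤ ENNReal.ofReal (ε/3) + ENNReal.ofReal (ε/3) := add_le_add hU (hV.trans ht)
      _ = ENNReal.ofReal (ε/3 + ε/3) := (ENNReal.ofReal_add (by positivity) (by positivity)).symm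
      _ < _ := (ENNReal.ofReal_lt_ofReal_iff hε).2 (by linarith)
  · intro x hxS
    obtain ⟨hxU, hx⟩ := hnd x hxS
    set M := maxOp n δ (fun y => Real.exp (e * f y)) with hM
    have hMt : M x ≠ ⊤ := ne_top_of_le_ne_top ENNReal.ofReal_ne_top (maxOp_le_of_dens hδ hδn hf he hjn hx)
    have hM0 : M x ≠ 0 := by
      have h1 := le_maxOp_of_dens (f := f) hδ hδn he hx
      have h2 : 0 < ENNReal.ofReal (Real.exp (e * f x)) := ENNReal.ofReal_pos.2 (Real.exp_pos _)
      exact (h2.trans_le h1).ne'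
    have hcont : ContinuousWithinAt M (U ∪ V)ᶜ x := by
      refine tendsto_order.2 ⟨fun c hc => nhdsWithin_le_nhds (maxOp_lsc hδ hδn hc), fun c hcM => ?_⟩
      obtain ⟨τ, hτ, hτ2⟩ : ∃ τ : ℝ, 1 < τ ∧ ENNReal.ofReal τ * M x < c := by
        have h1 : Filter.Tendsto (fun τ : ℝ => ENNReal.ofReal τ * M x) (𝓝[>] 1) (𝓝 (ENNReal.ofReal 1 * M x)) :=
          (ENNReal.Tendsto.mul_const (ENNReal.continuous_ofReal.tendsto 1) (Or.inr hMt)).mono_left nhdsWithin_le_nhds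
        rw [ENNReal.ofReal_one, one_mul] at h1
        obtain ⟨τ, h2, h3⟩ := ((h1.eventually_lt_const hcM).and self_mem_nhdsWithin).exists
        exact ⟨τ, h3, h2⟩
      obtain ⟨r, hr, hr2⟩ := maxOp_usc hδ hδn hf he hjn hOU hc hd hxU hx hτ
      filter_upwards [self_mem_nhdsWithin, nhdsWithin_le_nhds (Metric.ball_mem_nhds x hr)] with y hyS hyr
      obtain ⟨hyU, hy⟩ := hnd y hyS
      exact (hr2 y hyU hy hyr).trans_lt hτ2
    have h2 : ContinuousWithinAt (fun y => (M y).toReal) (U ∪ V)ᶜ x :=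
      (ENNReal.continuousAt_toReal hMt).comp_continuousWithinAt hcont
    exact h2.log (ENNReal.toReal_pos hM0 hMt).ne'

lemma QuasiCont.comp_cont {u : (Fin n → ℝ) → ℝ} (hu : QuasiCont n δ u) {φ : ℝ → ℝ} (hφ : Continuous φ) :
    QuasiCont n δ (fun x => φ (u x)) := by
  intro ε hε
  obtain ⟨O, h1, h2, h3⟩ := hu ε hε
  exact ⟨O, h1, h2, hφ.comp_continuousOn h3⟩

lemma QuasiCont.sub (hδ : 0 < δ) {u v : (Fin n → ℝ) → ℝ} (hu : QuasiCont n δ u) (hv : QuasiCont n δ v) :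
    QuasiCont n δ (fun x => u x - v x) := by
  intro ε hε
  obtain ⟨O, h1, h2, h3⟩ := hu (ε/2) (by positivity)
  obtain ⟨P, h4, h5, h6⟩ := hv (ε/2) (by positivity)
  refine ⟨O ∪ P, h1.union h4, ?_, ?_⟩
  · calc _ ≤ _ := hContent_union hδ O P
      _ < ENNReal.ofReal (ε/2) + ENNReal.ofReal (ε/2) := ENNReal.add_lt_add h2 h5
      _ = ENNReal.ofReal ε := by rw [← ENNReal.ofReal_add (by positivity) (by positivity)]; congr 1; ring
  · exact (h3.mono (compl_subset_compl.2 subset_union_left)).sub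
      (h6.mono (compl_subset_compl.2 subset_union_right))

lemma exists_cube_of_compact {K : Set (Fin n → ℝ)} (hK : IsCompact K) : ∃ Q : Cube n, K ⊆ Q.toSet := by
  obtain ⟨r, hr⟩ := hK.isBounded.subset_closedBall 0
  refine ⟨⟨fun _ => -(|r| + 1), 2 * (|r| + 2), by positivity⟩, fun x hx i => ?_⟩
  have h1 := hr hx
  rw [mem_closedBall_zero_iff] at h1
  have h2 := (norm_le_pi_norm x i).trans (h1.trans (le_abs_self r))
  rw [Real.norm_eq_abs, abs_le] at h2
  simp only
  constructor <;> linarith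

lemma bounded_below_of_dens (hδ : 0 < δ) (hδn : δ ≤ n) {B : ℝ} (hB : 0 ≤ B)
    (hblo : ∀ Q : Cube n, integH n δ (fun x => |f x - essInfQ n δ f Q|) Q.toSet ≤ ENNReal.ofReal B * Q.sz δ)
    {x : Fin n → ℝ} (hx : DensPt n δ f x) : -(4 * B) ≤ f x := by
  by_contra hlt
  push Not at hlt
  set v := -f x with hv
  have hv0 : 0 < v := by linarith
  obtain ⟨R, hxR, -, hR⟩ := dens_cube hδ hδn hx (unitCube x).corner_mem (η := v/2) (by positivity)
    (θ := 1/2) (by norm_num)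
  have hc := essInfQ_nonneg (δ := δ) (f := f) R
  have h1 := (integH_cheb (δ := δ) (fun y => |f y - essInfQ n δ f R|) R.toSet (v/2)).trans (hblo R)
  have h3 : hContent n δ (R.toSet ∩ {y | |f y - f x| < v/2}) ≤
      hContent n δ {y | y ∈ R.toSet ∧ v/2 < |f y - essInfQ n δ f R|} := by
    refine hContent_mono fun y hy => ⟨hy.1, ?_⟩
    have hyy : |f y - f x| < v/2 := hy.2
    rw [abs_lt] at hyy
    have := neg_abs_le (f y - essInfQ n δ f R)
    linarith
  have h4 : ENNReal.ofReal (1 / 2) * R.sz δ ≤ hContent n δ (R.toSet ∩ {y | |f y - f x| < v/2}) := by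
    have : ENNReal.ofReal (1 / 2) = 1 - ENNReal.ofReal (1/2) := by
      rw [← ENNReal.ofReal_one, ← ENNReal.ofReal_sub _ (by norm_num)]; norm_num
    rw [this, ENNReal.sub_mul (fun _ _ => R.sz_ne_top), one_mul]
    exact tsub_le_iff_right.2 hR
  have h5 : ENNReal.ofReal (v/2) * (ENNReal.ofReal (1/2) * R.sz δ) ≤ ENNReal.ofReal B * R.sz δ :=
    le_trans (by gcongr; exact h4.trans h3) h1
  rw [← mul_assoc, ENNReal.mul_le_mul_iff_left R.sz_pos.ne' R.sz_ne_top, ← ENNReal.ofReal_mul (by positivity),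
    ENNReal.ofReal_le_ofReal_iff hB] at h5
  linarith

lemma essInfQ_max (f : (Fin n → ℝ) → ℝ) (Q : Cube n) :
    essInfQ n δ (fun x => max (f x) 0) Q = essInfQ n δ f Q := by
  unfold essInfQ
  congr 1
  ext t
  simp only [mem_ofPred_eq]
  refine and_congr_right fun ht => ?_
  simp [ht]

theorem stmt9_aux (n : ℕ) (hn : 1 ≤ n) (δ : ℝ) (hδ0 : 0 < δ) (hδn : δ ≤ n) :
    ∀ f : (Fin n → ℝ) → ℝ, MemBLO n δ f →
      ∃ (α : ℝ) (b g : (Fin n → ℝ) → ℝ),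
        0 ≤ α ∧ MemLinf n δ b ∧ MemL1loc n δ g ∧
          AEContent n δ (fun x => f x = α * Real.log (maxOp n δ g x).toReal + b x) := by
  rintro f₀ ⟨⟨hq₀, -⟩, hblo⟩
  set B := (bloNorm n δ f₀).toReal with hBdef
  have hB : ENNReal.ofReal B = bloNorm n δ f₀ := ENNReal.ofReal_toReal hblo.ne
  have hB0 : 0 ≤ B := ENNReal.toReal_nonneg
  have h0 : ∀ Q : Cube n, integH n δ (fun x => |f₀ x - essInfQ n δ f₀ Q|) Q.toSet ≤ ENNReal.ofReal B * Q.sz δ := by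
    intro Q
    rw [hB, ← ENNReal.div_le_iff Q.sz_pos.ne' Q.sz_ne_top, ← hContent_cube hδ0 hδn Q]
    exact le_iSup (fun Q : Cube n => integH n δ (fun x => |f₀ x - essInfQ n δ f₀ Q|) Q.toSet / hContent n δ Q.toSet) Q
  set f : (Fin n → ℝ) → ℝ := fun x => max (f₀ x) 0 with hfdef
  have hf : ∀ x, 0 ≤ f x := fun x => le_max_right _ _
  have h1 : ∀ Q : Cube n, integH n δ (fun x => |f x - essInfQ n δ f Q|) Q.toSet ≤ ENNReal.ofReal B * Q.sz δ := by
    intro Q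
    refine le_trans (integH_mono subset_rfl fun x _ => ?_) (h0 Q)
    rw [hfdef, essInfQ_max]
    have hc := essInfQ_nonneg (δ := δ) (f := f₀) Q
    have := abs_max_sub_max_le_abs (f₀ x) (essInfQ n δ f₀ Q) 0
    rwa [max_eq_left hc] at this
  have hq : QuasiCont n δ f := hq₀.comp_cont (φ := fun t => max t 0) (by fun_prop)
  obtain ⟨e, he, hjn⟩ := jn hδ0 hδn hf ENNReal.ofReal_ne_top h1
  have hlq := quasiCont_log_maxOp hn hδ0 hδn hf hq he hjn
  set M := maxOp n δ (fun y => Real.exp (e * f y)) with hM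
  refine ⟨1/e, fun x => f₀ x - (1/e) * Real.log (M x).toReal, fun y => Real.exp (e * f y), by positivity,
    ⟨hq₀.sub hδ0 (hlq.comp_cont (φ := fun t => (1/e) * t) (by fun_prop)), 4 * B + Real.log 4 / e, ?_⟩,
    ⟨hq.comp_cont (φ := fun t => Real.exp (e * t)) (by fun_prop), fun K hK => ?_⟩, ?_⟩
  · have hz : hContent n δ ({x | ¬ DensPt n δ f x} ∪ {x | ¬ DensPt n δ f₀ x}) ≤ 0 := by
      refine (hContent_union hδ0 _ _).trans ?_
      have e1 : hContent n δ {x | ¬ DensPt n δ f x} = 0 := densPt_ae hn hδ0 hq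
      have e2 : hContent n δ {x | ¬ DensPt n δ f₀ x} = 0 := densPt_ae hn hδ0 hq₀
      rw [e1, e2, add_zero]
    refine le_antisymm ((hContent_mono fun x hx => ?_).trans hz) bot_le
    by_contra hd
    rw [mem_union, not_or] at hd
    have hd1 : DensPt n δ f x := not_not.1 hd.1
    have hd2 : DensPt n δ f₀ x := not_not.1 hd.2
    refine hx ?_
    have b1 := bounded_below_of_dens hδ0 hδn hB0 h0 hd2
    have b2 : ENNReal.ofReal (Real.exp (e * f x)) ≤ M x := le_maxOp_of_dens hδ0 hδn he hd1
    have b3 : M x ≤ ENNReal.ofReal (4 * Real.exp (e * f x)) := maxOp_le_of_dens hδ0 hδn hf he hjn hd1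
    have hE := Real.exp_pos (e * f x)
    have hMt : M x ≠ ⊤ := ne_top_of_le_ne_top ENNReal.ofReal_ne_top b3
    have b4 : Real.exp (e * f x) ≤ (M x).toReal := (ENNReal.ofReal_le_iff_le_toReal hMt).1 b2
    have b5 : (M x).toReal ≤ 4 * Real.exp (e * f x) := ENNReal.toReal_le_of_le_ofReal (by positivity) b3
    have hMp : 0 < (M x).toReal := hE.trans_le b4
    have b6 : e * f x ≤ Real.log (M x).toReal := (Real.le_log_iff_exp_le hMp).2 b4
    have b7 : Real.log (M x).toReal ≤ Real.log 4 + e * f x := by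
      have := Real.log_le_log hMp b5
      rwa [Real.log_mul (by norm_num) hE.ne', Real.log_exp] at this
    have b8 : f x ≤ (1/e) * Real.log (M x).toReal := by
      rw [one_div, ← div_eq_inv_mul, le_div_iff₀ he]; linarith
    have b9 : (1/e) * Real.log (M x).toReal ≤ Real.log 4 / e + f x := by
      rw [one_div, ← div_eq_inv_mul, div_le_iff₀ he, add_mul, div_mul_cancel₀ _ he.ne']; linarith
    have c1 : f₀ x ≤ f x := le_max_left _ _
    have c2 : f x ≤ f₀ x + 4 * B := max_le (by linarith) (by linarith)
    have c3 : 0 ≤ Real.log 4 / e := div_nonneg (Real.log_nonneg (by norm_num)) he.le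
    show |f₀ x - (1/e) * Real.log (M x).toReal| ≤ _
    rw [abs_le]
    constructor <;> linarith
  · obtain ⟨Q, hQ⟩ := exists_cube_of_compact hK
    refine lt_of_le_of_lt ((integH_mono hQ fun _ _ => le_rfl).trans (integH_exp_le4 hδ0 he hjn (Q := Q) le_rfl)) ?_
    exact ENNReal.mul_lt_top ENNReal.ofReal_lt_top (lt_top_iff_ne_top.2 Q.sz_ne_top)
  · unfold AEContent
    convert hContent_empty (n := n) hδ0
    ext x
    simp [hM]

end Part6

/-- factorization of BLO(ℝⁿ, ℋ^δ_∞) via the maximal operator. -/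
theorem stmt9 (n : ℕ) (hn : 1 ≤ n) (δ : ℝ) (hδ0 : 0 < δ) (hδn : δ ≤ n) :
    ∀ f : (Fin n → ℝ) → ℝ, MemBLO n δ f →
      ∃ (α : ℝ) (b g : (Fin n → ℝ) → ℝ),
        0 ≤ α ∧ MemLinf n δ b ∧ MemL1loc n δ g ∧
          AEContent n δ (fun x => f x = α * Real.log (maxOp n δ g x).toReal + b x) := by
  exact stmt9_aux n hn δ hδ0 hδn
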